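/- arXiv:1412.8161 — 2 statements merged into one kernel-verified Lean document; each statement's English description precedes it below -/
import Mathlib

section
/- Let L : (0,∞) → (0,∞) be measurable, non-decreasing, slowly varying, bounded above by M ∈ (0,∞), with ∫₀^∞ t^{-3/2} L(t) dt = 1/K for some K > 0. For y > 0, τ > 0 and k > 0 set I_k = ∫₀^∞ (tτ²)^{k−1/2} (1+tτ²)^{-k} t^{-3/2} L(t) e^{tτ²y/(1+tτ²)} dt. Then for every y > 0 and every 0 < τ < 1/2, I_{1/2} ≤ τ [ e^{τ²y}/(Kτ) + 2M e^{τy}(1/τ − 1/√τ) + 2M e^{y/2}(1/√τ − √2) + (2M√2/y)(e^{y} − e^{y/2}) ]. -/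
open MeasureTheory Filter Set

noncomputable section

namespace OneGroup

/-- A one-group (global-local) shrinkage prior: the local variance `λ²` has density
`π(λ²) = K (λ²)^{-a-1} L(λ²)` on `(0,∞)`, where `L` is a positive, measurable,
non-constant slowly varying function, bounded above by `M`, and bounded below by
`c₀` on `[t₀, ∞)`. -/
structure Prior where
  K : ℝ
  a : ℝ
  L : ℝ → ℝ
  M : ℝ
  c₀ : ℝ
  t₀ : ℝ
  K_pos : 0 < K
  a_pos : 0 < a
  L_pos : ∀ t : ℝ, 0 < t → 0 < L t
  L_meas : Measurable L
  L_slow : ∀ c : ℝ, 0 < c → Tendsto (fun t => L (c * t) / L t) atTop (nhds 1)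
  L_nonconst : ∃ s : ℝ, 0 < s ∧ ∃ t : ℝ, 0 < t ∧ L s ≠ L t
  M_pos : 0 < M
  L_le : ∀ t : ℝ, 0 < t → L t ≤ M
  c₀_pos : 0 < c₀
  t₀_pos : 0 < t₀
  L_ge : ∀ t : ℝ, t₀ ≤ t → c₀ ≤ L t

/-- The (unnormalized) posterior weight, as a function of `t = λ²`, entering all
posterior expectations of functions of the shrinkage coefficient `κ = 1/(1+tτ²)`. -/
def wt (P : Prior) (x τ t : ℝ) : ℝ :=
  (1 + t * τ ^ 2) ^ (-(1:ℝ)/2) * t ^ (-P.a - 1) * P.L t *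
    Real.exp (-x ^ 2 / (2 * (1 + t * τ ^ 2)))

/-- Posterior expectation `E(g(κ) | x, τ)` of a function `g` of the shrinkage
coefficient `κ = 1/(1+λ²τ²)`. -/
def postExp (P : Prior) (g : ℝ → ℝ) (x τ : ℝ) : ℝ :=
  (∫ t in Ioi (0:ℝ), g (1 / (1 + t * τ ^ 2)) * wt P x τ t) /
    (∫ t in Ioi (0:ℝ), wt P x τ t)

/-- The posterior mean `T_τ(x) = x (1 - E(κ | x, τ))`. -/
def T (P : Prior) (τ x : ℝ) : ℝ := x * (1 - postExp P (fun κ => κ) x τ)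

/-- The marginal prior density `p_τ(θ)` of `θ`. -/
def pdens (P : Prior) (τ θ : ℝ) : ℝ :=
  ∫ u in Ioi (0:ℝ),
    (Real.sqrt (2 * Real.pi * u * τ ^ 2))⁻¹ * Real.exp (-θ ^ 2 / (2 * u * τ ^ 2)) *
      (P.K * u ^ (-P.a - 1) * P.L u)

/-- The unnormalized posterior density of `θ` given an observation `x ~ N(θ,1)`. -/
def postw (P : Prior) (τ x θ : ℝ) : ℝ := Real.exp (-(x - θ) ^ 2 / 2) * pdens P τ θ

/-- The `k`-th posterior moment of `θ` given `x`. -/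
def postMoment (P : Prior) (τ x : ℝ) (k : ℕ) : ℝ :=
  (∫ θ : ℝ, θ ^ k * postw P τ x θ) / (∫ θ : ℝ, postw P τ x θ)

/-- The posterior variance `Var(θ | x)`. -/
def postVar (P : Prior) (τ x : ℝ) : ℝ := postMoment P τ x 2 - (postMoment P τ x 1) ^ 2

/-- The standard normal density. -/
def gauss (z : ℝ) : ℝ := (Real.sqrt (2 * Real.pi))⁻¹ * Real.exp (-z ^ 2 / 2)

/-- Expectation of `f(X)` for `X ~ N(θ, 1)`. -/
def E1 (θ : ℝ) (f : ℝ → ℝ) : ℝ := ∫ x : ℝ, f x * gauss (x - θ)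

/-- Expectation of `f(X)` for `X ~ N_n(θ, I_n)`. -/
def EN (n : ℕ) (θ : Fin n → ℝ) (f : (Fin n → ℝ) → ℝ) : ℝ :=
  ∫ x : Fin n → ℝ, f x * ∏ i, gauss (x i - θ i)

/-- The posterior probability `Π(A | x)` of a set `A ⊆ ℝⁿ` given data `x`,
for the coordinatewise-independent posterior. -/
def postProb (P : Prior) (τ : ℝ) {n : ℕ} (x : Fin n → ℝ) (A : Set (Fin n → ℝ)) : ℝ :=
  (∫ θ in A, ∏ i, postw P τ (x i) (θ i)) /
    (∫ θ : Fin n → ℝ, ∏ i, postw P τ (x i) (θ i))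

/-- The set `l₀[p]` of nearly black vectors in `ℝⁿ`. -/
def nearlyBlack (n p : ℕ) : Set (Fin n → ℝ) :=
  {θ | (Finset.univ.filter fun i => θ i ≠ 0).card ≤ p}

end OneGroup

open OneGroup

/-! The shrinkage weight `w = tτ² / (1 + tτ²) = 1 - κ` maps `(0, ∞)` onto `(0, 1)`, and in this
variable `t^{-3/2} dt = τ w^{-3/2} (1 - w)^{-1/2} dw`, so that `I_k = τ ∫₀¹ w^{k-2} L e^{wy} dw`.
For `k = 1/2` split `(0, 1)` at `τ²`, `τ` and `1/2`. On `(0, τ²)` bound `e^{wy}` by `e^{τ²y}` and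
the remaining integral by the mass `1/K` of the prior; on the two middle pieces bound `e^{wy}` by
its value at the right endpoint and integrate `w^{-3/2}`; on `(1/2, 1)` bound `w^{-3/2}` by `2√2`
and integrate `e^{wy}`. -/

namespace OneGroup

/-- The local variance `t = λ²` whose shrinkage weight `1 - κ = tσ / (1 + tσ)` equals `w`, for the
squared global scale `σ = τ²`. It is the inverse of the change of variables `t ↦ 1 - κ` from
`(0, ∞)` to `(0, 1)`; at `w = 1` division by zero gives the value `0`. -/
def localVariance (σ w : ℝ) : ℝ := w / (σ * (1 - w))

section ChangeOfVariables

variable {σ w : ℝ}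

lemma localVariance_mul (hσ : σ ≠ 0) : localVariance σ w * σ = w / (1 - w) := by
  rw [localVariance, div_mul_eq_mul_div, mul_comm w, mul_div_mul_left _ _ hσ]

lemma one_add_localVariance_mul (hσ : σ ≠ 0) (hw : w ≠ 1) :
    1 + localVariance σ w * σ = (1 - w)⁻¹ := by
  have : 1 - w ≠ 0 := sub_ne_zero.2 hw.symm
  rw [localVariance_mul hσ]
  field_simp
  ring

lemma localVariance_mul_div_one_add (hσ : σ ≠ 0) (hw : w ≠ 1) :
    localVariance σ w * σ / (1 + localVariance σ w * σ) = w := by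
  rw [one_add_localVariance_mul hσ hw, localVariance_mul hσ, div_inv_eq_mul,
    div_mul_cancel₀ _ (sub_ne_zero.2 hw.symm)]

lemma localVariance_pos (hσ : 0 < σ) (hw : w ∈ Ioo 0 1) : 0 < localVariance σ w :=
  div_pos hw.1 (mul_pos hσ (sub_pos.2 hw.2))

lemma hasDerivAt_localVariance (hσ : σ ≠ 0) (hw : w ≠ 1) :
    HasDerivAt (localVariance σ) (σ * (1 - w) ^ 2)⁻¹ w := by
  have : 1 - w ≠ 0 := sub_ne_zero.2 hw.symm
  have h := (hasDerivAt_id w).div (((hasDerivAt_id w).const_sub 1).const_mul σ)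
    (mul_ne_zero hσ this)
  refine h.congr_deriv ?_
  simp only [id_eq]
  field_simp
  ring

lemma bijOn_localVariance (hσ : 0 < σ) : BijOn (localVariance σ) (Ioo 0 1) (Ioi 0) := by
  have leftInv : LeftInvOn (fun t => t * σ / (1 + t * σ)) (localVariance σ) (Ioo 0 1) :=
    fun w hw => localVariance_mul_div_one_add hσ.ne' hw.2.ne
  have rightInv : RightInvOn (fun t => t * σ / (1 + t * σ)) (localVariance σ) (Ioi 0) := by
    intro t (ht : 0 < t)
    have : 1 + t * σ ≠ 0 := by positivity
    simp only [localVariance]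
    field_simp
    ring
  refine InvOn.bijOn ⟨leftInv, rightInv⟩ (fun w hw => localVariance_pos hσ hw) fun t ht => ?_
  have : 0 < t * σ := mul_pos ht hσ
  exact ⟨by positivity, (div_lt_one (by positivity)).2 (by linarith)⟩

lemma jacobian_mul_localVariance_rpow (hσ : 0 < σ) (hw : w ∈ Ioo 0 1) (s : ℝ) :
    (σ * (1 - w) ^ 2)⁻¹ * localVariance σ w ^ s = σ ^ (-s - 1) * (w ^ s * (1 - w) ^ (-s - 2)) := by
  have hw' : 0 < 1 - w := sub_pos.2 hw.2
  rw [localVariance, Real.div_rpow hw.1.le (by positivity), Real.mul_rpow hσ.le hw'.le,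
    Real.rpow_sub hσ, Real.rpow_sub hw', Real.rpow_neg hσ.le, Real.rpow_neg hw'.le, Real.rpow_one,
    Real.rpow_two]
  field_simp

lemma abs_jacobian_smul_rpow_mul (hσ : 0 < σ) (hw : w ∈ Ioo 0 1) (s c : ℝ) :
    |(σ * (1 - w) ^ 2)⁻¹| • (localVariance σ w ^ s * c) =
      σ ^ (-s - 1) * (w ^ s * (1 - w) ^ (-s - 2) * c) := by
  rw [abs_of_nonneg (by positivity), smul_eq_mul, ← mul_assoc,
    jacobian_mul_localVariance_rpow hσ hw, mul_assoc]

lemma integral_Ioi_rpow_mul (hσ : 0 < σ) (s : ℝ) (g : ℝ → ℝ) :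
    ∫ t in Ioi (0 : ℝ), t ^ s * g t =
      σ ^ (-s - 1) * ∫ w in (0 : ℝ)..1, w ^ s * (1 - w) ^ (-s - 2) * g (localVariance σ w) := by
  rw [← (bijOn_localVariance hσ).image_eq, integral_image_eq_integral_abs_deriv_smul
      measurableSet_Ioo (fun w hw => (hasDerivAt_localVariance hσ.ne' hw.2.ne).hasDerivWithinAt)
      (bijOn_localVariance hσ).injOn,
    setIntegral_congr_fun measurableSet_Ioo fun w hw => abs_jacobian_smul_rpow_mul hσ hw s _,
    integral_const_mul, intervalIntegral.integral_of_le zero_le_one, integral_Ioc_eq_integral_Ioo]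

lemma integrableOn_Ioi_rpow_mul_iff (hσ : 0 < σ) (s : ℝ) (g : ℝ → ℝ) :
    IntegrableOn (fun t => t ^ s * g t) (Ioi 0) ↔
      IntervalIntegrable (fun w => w ^ s * (1 - w) ^ (-s - 2) * g (localVariance σ w))
        volume 0 1 := by
  rw [← (bijOn_localVariance hσ).image_eq, integrableOn_image_iff_integrableOn_abs_deriv_smul
      measurableSet_Ioo (fun w hw => (hasDerivAt_localVariance hσ.ne' hw.2.ne).hasDerivWithinAt)
      (bijOn_localVariance hσ).injOn,
    integrableOn_congr_fun (fun w hw => abs_jacobian_smul_rpow_mul hσ hw s _) measurableSet_Ioo,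
    intervalIntegrable_iff_integrableOn_Ioo_of_le zero_le_one]
  exact integrable_const_mul_iff (Real.rpow_pos_of_pos hσ _).ne'.isUnit _

lemma integral_posterior_eq_integral_shrinkage (hσ : 0 < σ) (k s y : ℝ) (L : ℝ → ℝ) :
    ∫ t in Ioi (0 : ℝ), (t * σ) ^ (k - 1 / 2) * (1 + t * σ) ^ (-k) * t ^ s * L t *
        Real.exp (t * σ * y / (1 + t * σ)) =
      σ ^ (-s - 1) * ∫ w in (0 : ℝ)..1, w ^ (s + k - 1 / 2) * (1 - w) ^ (-s - 3 / 2) *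
        L (localVariance σ w) * Real.exp (w * y) := by
  have factor_rpow (t : ℝ) : (t * σ) ^ (k - 1 / 2) * (1 + t * σ) ^ (-k) * t ^ s * L t *
      Real.exp (t * σ * y / (1 + t * σ)) = t ^ s * ((t * σ) ^ (k - 1 / 2) * (1 + t * σ) ^ (-k) *
        L t * Real.exp (t * σ * y / (1 + t * σ))) := by ring
  simp only [factor_rpow]
  rw [integral_Ioi_rpow_mul hσ]
  congr 1
  refine intervalIntegral.integral_congr_Ioo_of_le zero_le_one fun w hw => ?_
  have hw' : 0 < 1 - w := sub_pos.2 hw.2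
  have pow_w : w ^ (s + k - 1 / 2) = w ^ s * w ^ (k - 1 / 2) := by
    rw [← Real.rpow_add hw.1, add_sub_assoc]
  have pow_one_sub_w : (1 - w) ^ (-s - 3 / 2) =
      (1 - w) ^ (-s - 2) * ((1 - w) ^ k / (1 - w) ^ (k - 1 / 2)) := by
    rw [← Real.rpow_sub hw', ← Real.rpow_add hw']
    ring_nf
  rw [mul_div_right_comm, localVariance_mul_div_one_add hσ.ne' hw.2.ne,
    one_add_localVariance_mul hσ.ne' hw.2.ne, localVariance_mul hσ.ne',
    Real.div_rpow hw.1.le hw'.le, Real.inv_rpow hw'.le, ← Real.rpow_neg hw'.le, neg_neg,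
    pow_w, pow_one_sub_w]
  ring

end ChangeOfVariables

section UnitInterval

variable {f : ℝ → ℝ} {M p q s u y : ℝ}

lemma integral_rpow_mul_mul_exp_le_mul_integral_rpow (hp : 0 < p) (hpq : p ≤ q) (hy : 0 ≤ y)
    (hf : ∀ w ∈ Ioo p q, 0 ≤ f w) (hfM : ∀ w ∈ Ioo p q, f w ≤ M)
    (hint : IntervalIntegrable (fun w => w ^ s * f w * Real.exp (w * y)) volume p q) :
    ∫ w in p..q, w ^ s * f w * Real.exp (w * y) ≤ M * Real.exp (q * y) * ∫ w in p..q, w ^ s := by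
  rw [← intervalIntegral.integral_const_mul]
  refine intervalIntegral.integral_mono_on_of_le_Ioo hpq hint
    (.const_mul (intervalIntegral.intervalIntegrable_rpow <|
      .inr <| notMem_uIcc_of_lt hp (hp.trans_le hpq)) _) fun w hw => ?_
  have hw0 : 0 < w := hp.trans hw.1
  have hM : 0 ≤ M := (hf w hw).trans (hfM w hw)
  calc w ^ s * f w * Real.exp (w * y)
      ≤ w ^ s * M * Real.exp (q * y) := by
        gcongr
        exacts [hfM w hw, hw.2.le]
    _ = M * Real.exp (q * y) * w ^ s := by ring

lemma integral_rpow_mul_mul_exp_le_mul_exp_sub_exp (hp : 0 < p) (hpq : p ≤ q) (hs : s ≤ 0)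
    (hy : y ≠ 0) (hf : ∀ w ∈ Ioo p q, 0 ≤ f w) (hfM : ∀ w ∈ Ioo p q, f w ≤ M)
    (hint : IntervalIntegrable (fun w => w ^ s * f w * Real.exp (w * y)) volume p q) :
    ∫ w in p..q, w ^ s * f w * Real.exp (w * y) ≤
      M * p ^ s / y * (Real.exp (q * y) - Real.exp (p * y)) := by
  have integral_exp_mul : ∫ w in p..q, Real.exp (w * y) =
      y⁻¹ * (Real.exp (q * y) - Real.exp (p * y)) := by
    rw [intervalIntegral.integral_comp_mul_right _ hy, integral_exp, smul_eq_mul]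
  calc ∫ w in p..q, w ^ s * f w * Real.exp (w * y)
      ≤ ∫ w in p..q, p ^ s * M * Real.exp (w * y) := by
        refine intervalIntegral.integral_mono_on_of_le_Ioo hpq hint
          (Continuous.intervalIntegrable (by fun_prop) _ _) fun w hw => ?_
        have hfw := hf w hw
        gcongr ?_ * ?_ * _
        exacts [Real.rpow_le_rpow_of_nonpos hp hw.1.le hs, hfM w hw]
    _ = M * p ^ s / y * (Real.exp (q * y) - Real.exp (p * y)) := by
        rw [intervalIntegral.integral_const_mul, integral_exp_mul]
        ring

lemma integral_rpow_mul_mul_exp_le_exp_mul_integral (hp : 0 ≤ p) (hp1 : p ≤ 1) (hy : 0 ≤ y)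
    (hu : u ≤ 0) (hf : ∀ w ∈ Ioo 0 1, 0 ≤ f w)
    (hint : IntervalIntegrable (fun w => w ^ s * f w * Real.exp (w * y)) volume 0 p)
    (hmass : IntervalIntegrable (fun w => w ^ s * (1 - w) ^ u * f w) volume 0 1) :
    ∫ w in 0..p, w ^ s * f w * Real.exp (w * y) ≤
      Real.exp (p * y) * ∫ w in 0..1, w ^ s * (1 - w) ^ u * f w := by
  have mass_nonneg : 0 ≤ᵐ[volume.restrict (Ioc 0 1)] fun w => w ^ s * (1 - w) ^ u * f w := by
    rw [← restrict_Ioo_eq_restrict_Ioc]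
    refine ae_restrict_of_forall_mem measurableSet_Ioo fun w hw => ?_
    have := hf w hw
    have := hw.1
    have := sub_pos.2 hw.2
    simp only [Pi.zero_apply]
    positivity
  calc ∫ w in 0..p, w ^ s * f w * Real.exp (w * y)
      ≤ ∫ w in 0..p, Real.exp (p * y) * (w ^ s * (1 - w) ^ u * f w) := by
        refine intervalIntegral.integral_mono_on_of_le_Ioo hp hint
          ((hmass.mono_set (uIcc_subset_uIcc_left (by simp [hp, hp1]))).const_mul _) fun w hw => ?_
        have hw0 : 0 < w := hw.1
        have hw1 : w < 1 := hw.2.trans_le hp1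
        have hfw := hf w ⟨hw0, hw1⟩
        have one_le : 1 ≤ (1 - w) ^ u :=
          Real.one_le_rpow_of_pos_of_le_one_of_nonpos (sub_pos.2 hw1) (by linarith) hu
        calc w ^ s * f w * Real.exp (w * y)
            ≤ w ^ s * (1 - w) ^ u * f w * Real.exp (p * y) := by
              gcongr
              exacts [le_mul_of_one_le_right (by positivity) one_le, hw.2.le]
          _ = Real.exp (p * y) * (w ^ s * (1 - w) ^ u * f w) := mul_comm _ _
    _ = Real.exp (p * y) * ∫ w in 0..p, w ^ s * (1 - w) ^ u * f w :=
        intervalIntegral.integral_const_mul _ _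
    _ ≤ Real.exp (p * y) * ∫ w in 0..1, w ^ s * (1 - w) ^ u * f w := by
        gcongr
        exact intervalIntegral.integral_mono_interval le_rfl hp hp1 mass_nonneg hmass

lemma intervalIntegrable_rpow_mul_mul_exp (hu : u ≤ 0) (y : ℝ)
    (hmass : IntervalIntegrable (fun w => w ^ s * (1 - w) ^ u * f w) volume 0 1) :
    IntervalIntegrable (fun w => w ^ s * f w * Real.exp (w * y)) volume 0 1 := by
  have hcont : Continuous fun w : ℝ => (1 - w) ^ (-u) * Real.exp (w * y) :=
    ((continuous_const.sub continuous_id).rpow_const fun _ => .inr (neg_nonneg.2 hu)).mul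
      (by fun_prop)
  refine (hmass.mul_continuousOn hcont.continuousOn).congr_uIoo fun w hw => ?_
  rw [uIoo_of_le zero_le_one] at hw
  have : (1 - w) ^ u ≠ 0 := (Real.rpow_pos_of_pos (sub_pos.2 hw.2) u).ne'
  simp only [Real.rpow_neg (sub_pos.2 hw.2).le]
  field_simp

lemma integral_zero_one_rpow_mul_mul_exp_le {r : ℝ} (hp : 0 < p) (hpq : p ≤ q) (hqr : q ≤ r)
    (hr : r ≤ 1) (hs : s ≤ 0) (hu : u ≤ 0) (hy : 0 < y)
    (hf : ∀ w ∈ Ioo 0 1, 0 ≤ f w) (hfM : ∀ w ∈ Ioo 0 1, f w ≤ M)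
    (hmass : IntervalIntegrable (fun w => w ^ s * (1 - w) ^ u * f w) volume 0 1) :
    ∫ w in 0..1, w ^ s * f w * Real.exp (w * y) ≤
      Real.exp (p * y) * (∫ w in 0..1, w ^ s * (1 - w) ^ u * f w) +
        M * Real.exp (q * y) * (∫ w in p..q, w ^ s) +
        M * Real.exp (r * y) * (∫ w in q..r, w ^ s) +
        M * r ^ s / y * (Real.exp y - Real.exp (r * y)) := by
  have hq : 0 < q := hp.trans_le hpq
  have hint {a b : ℝ} (ha : 0 ≤ a) (hab : a ≤ b) (hb : b ≤ 1) :
      IntervalIntegrable (fun w => w ^ s * f w * Real.exp (w * y)) volume a b :=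
    (intervalIntegrable_rpow_mul_mul_exp hu y hmass).mono_set <| by
      rw [uIcc_of_le hab, uIcc_of_le zero_le_one]
      exact Icc_subset_Icc ha hb
  have hsub {a b : ℝ} (ha : 0 ≤ a) (hb : b ≤ 1) : Ioo a b ⊆ Ioo 0 1 := Ioo_subset_Ioo ha hb
  have i₁ := hint le_rfl hp.le (by linarith)
  have i₂ := hint hp.le hpq (by linarith)
  have i₃ := hint hq.le hqr hr
  have i₄ := hint (by linarith) hr le_rfl
  rw [← intervalIntegral.integral_add_adjacent_intervals ((i₁.trans i₂).trans i₃) i₄,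
    ← intervalIntegral.integral_add_adjacent_intervals (i₁.trans i₂) i₃,
    ← intervalIntegral.integral_add_adjacent_intervals i₁ i₂]
  have head := integral_rpow_mul_mul_exp_le_exp_mul_integral hp.le (by linarith) hy.le hu hf i₁
    hmass
  have middle₁ := integral_rpow_mul_mul_exp_le_mul_integral_rpow hp hpq hy.le
    (fun w hw => hf w (hsub hp.le (by linarith) hw))
    (fun w hw => hfM w (hsub hp.le (by linarith) hw)) i₂
  have middle₂ := integral_rpow_mul_mul_exp_le_mul_integral_rpow hq hqr hy.le
    (fun w hw => hf w (hsub hq.le hr hw)) (fun w hw => hfM w (hsub hq.le hr hw)) i₃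
  have tail := integral_rpow_mul_mul_exp_le_mul_exp_sub_exp (hq.trans_le hqr) hr hs hy.ne'
    (fun w hw => hf w (hsub (by linarith) le_rfl hw))
    (fun w hw => hfM w (hsub (by linarith) le_rfl hw)) i₄
  rw [one_mul] at tail
  gcongr

end UnitInterval

lemma integral_rpow_neg_three_halves {p q : ℝ} (hp : 0 < p) (hq : 0 < q) :
    ∫ w in p..q, w ^ (-(3 : ℝ) / 2) = 2 * (1 / √p - 1 / √q) := by
  have rpow_eq {x : ℝ} (hx : 0 < x) : x ^ (-(3 : ℝ) / 2 + 1) = 1 / √x := by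
    rw [Real.sqrt_eq_rpow, one_div, ← Real.rpow_neg hx.le]
    norm_num
  rw [integral_rpow (.inr ⟨by norm_num, notMem_uIcc_of_lt hp hq⟩), rpow_eq hp, rpow_eq hq]
  ring

lemma one_half_rpow_neg_three_halves : (1 / 2 : ℝ) ^ (-(3 : ℝ) / 2) = 2 * √2 := by
  rw [one_div, Real.inv_rpow zero_le_two, ← Real.rpow_neg zero_le_two,
    show -(-(3 : ℝ) / 2) = 1 + 1 / 2 by norm_num, Real.rpow_add two_pos, Real.rpow_one,
    Real.sqrt_eq_rpow]

end OneGroup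

theorem I_one_half_upper_bound_general (L : ℝ → ℝ) (M K : ℝ) (hK : 0 < K)
    (hLnonneg : ∀ t : ℝ, 0 < t → 0 ≤ L t) (hLle : ∀ t : ℝ, 0 < t → L t ≤ M)
    (hLint : (∫ t in Ioi (0:ℝ), t ^ (-(3:ℝ)/2) * L t) = 1 / K)
    (y τ : ℝ) (hy : 0 < y) (hτ : 0 < τ) (hτ' : τ ≤ 1 / 2) :
    (∫ t in Ioi (0:ℝ), (t * τ ^ 2) ^ ((1:ℝ)/2 - 1/2) * (1 + t * τ ^ 2) ^ (-((1:ℝ)/2)) *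
        t ^ (-(3:ℝ)/2) * L t * Real.exp (t * τ ^ 2 * y / (1 + t * τ ^ 2))) ≤
      τ * (Real.exp (τ ^ 2 * y) / (K * τ) +
        2 * M * Real.exp (τ * y) * (1 / τ - 1 / Real.sqrt τ) +
        2 * M * Real.exp (y / 2) * (1 / Real.sqrt τ - Real.sqrt 2) +
        2 * M * Real.sqrt 2 / y * (Real.exp y - Real.exp (y / 2))) := by
  have hσ : 0 < τ ^ 2 := by positivity
  have scale : (τ ^ 2) ^ (-(-(3 : ℝ) / 2) - 1) = τ := by
    rw [show -(-(3 : ℝ) / 2) - 1 = 1 / 2 by norm_num, ← Real.sqrt_eq_rpow, Real.sqrt_sq hτ.le]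
  have hmass := (integrableOn_Ioi_rpow_mul_iff hσ _ L).1 <|
    not_imp_comm.1 integral_undef (hLint.trans_ne (by positivity))
  have mass_eq := (integral_Ioi_rpow_mul hσ _ L).symm.trans hLint
  rw [scale, mul_comm, ← eq_div_iff hτ.ne', div_div] at mass_eq
  have bound := integral_zero_one_rpow_mul_mul_exp_le (p := τ ^ 2) (q := τ) (r := 1 / 2) hσ
    (by nlinarith) hτ' (by norm_num) (by norm_num) (by norm_num) hy
    (fun w hw => hLnonneg _ (localVariance_pos hσ hw))
    (fun w hw => hLle _ (localVariance_pos hσ hw)) hmass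
  calc _ = τ * ∫ w in 0..1, w ^ (-(3 : ℝ) / 2) * L (localVariance (τ ^ 2) w) *
        Real.exp (w * y) := by
        rw [integral_posterior_eq_integral_shrinkage hσ, scale]
        norm_num
    _ ≤ _ := mul_le_mul_of_nonneg_left bound hτ.le
    _ = _ := by
        rw [mass_eq, integral_rpow_neg_three_halves hσ hτ,
          integral_rpow_neg_three_halves hτ one_half_pos, Real.sqrt_sq hτ.le,
          one_half_rpow_neg_three_halves, one_div_mul_eq_div, one_div 2, Real.sqrt_inv,
          one_div (√2)⁻¹, inv_inv]
        ring

/-- part of Lemma A.6: bound on the integral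
`I_{1/2} = ∫₀^∞ (tτ²)^{1/2 - 1/2} (1+tτ²)^{-(1/2)} t^{-3/2} L(t) e^{tτ²y/(1+tτ²)} dt`. -/
theorem I_one_half_upper_bound (L : ℝ → ℝ) (M K : ℝ) (hM : 0 < M) (hK : 0 < K)
    (hLpos : ∀ t : ℝ, 0 < t → 0 < L t)
    (hLmeas : Measurable L)
    (hLmono : ∀ s t : ℝ, 0 < s → s ≤ t → L s ≤ L t)
    (hLslow : ∀ c : ℝ, 0 < c → Tendsto (fun t => L (c * t) / L t) atTop (nhds 1))
    (hLle : ∀ t : ℝ, 0 < t → L t ≤ M)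
    (hLint : (∫ t in Ioi (0:ℝ), t ^ (-(3:ℝ)/2) * L t) = 1 / K)
    (y τ : ℝ) (hy : 0 < y) (hτ : 0 < τ) (hτ' : τ < 1 / 2) :
    (∫ t in Ioi (0:ℝ), (t * τ ^ 2) ^ ((1:ℝ)/2 - 1/2) * (1 + t * τ ^ 2) ^ (-((1:ℝ)/2)) *
        t ^ (-(3:ℝ)/2) * L t * Real.exp (t * τ ^ 2 * y / (1 + t * τ ^ 2))) ≤
      τ * (Real.exp (τ ^ 2 * y) / (K * τ) +
        2 * M * Real.exp (τ * y) * (1 / τ - 1 / Real.sqrt τ) +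
        2 * M * Real.exp (y / 2) * (1 / Real.sqrt τ - Real.sqrt 2) +
        2 * M * Real.sqrt 2 / y * (Real.exp y - Real.exp (y / 2))) :=
  I_one_half_upper_bound_general L M K hK (fun t ht => (hLpos t ht).le) hLle hLint y τ hy hτ hτ'.le
end
end

section
/- Suppose X ~ N_n(θ₀, I_n) and consider the one-group shrinkage prior with a = 1/2 applied independently to each coordinate. Let (p_n) be a sequence with p_n → ∞ and p_n = o(n), and set τ_n = p_n/n. Then for every sequence M_n → ∞, sup_{θ₀ ∈ l₀[p_n]} E_{θ₀} Π( θ ∈ ℝⁿ : ||θ − T_{τ_n}(X)||² > M_n p_n √(log(n/p_n)) | X ) → 0 as n → ∞, where T_{τ_n}(X) is the coordinatewise posterior mean. -/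
open MeasureTheory Filter Set

noncomputable section

open OneGroup

/-!
Given `x`, the coordinate `θ` is a mixture of the Gaussians `N(x (1 - κ), 1 - κ)`, so its posterior
variance is `E(1 - κ) + x² Var(1 - κ)`. For `a = 1/2` there are two bounds on it, up to constants:

* `τ exp (x²/2)`, by centring the variance at `0`: the weight of `κ` times
  `(1 - κ) + x² (1 - κ)²` then has an explicit primitive when `L` is constant;
* `1 + x⁴ exp (-x²/2) / τ`, by centring the variance at `1`.

Their minimum is bounded apart from bumps of height `log τ⁻¹` and width of order `1 / √(log τ⁻¹)`
at `|x| ≈ √(2 log τ⁻¹)`. Its mean is therefore `O(√(log τ⁻¹))` under every `N(m, 1)`, and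
`O(τ √(log τ⁻¹))` under `N(0, 1)`. With `τ = p / n`, the nonzero coordinates, at most `p`, and
the remaining ones, at most `n`, both contribute `O(p √(log (n / p)))` to the expected total
posterior variance, and Markov's inequality applied to the posterior concludes.
-/

namespace OneGroup

open ProbabilityTheory

section Normalized

variable {α : Type*} [MeasurableSpace α] {μ : Measure α} {f : α → ℝ}

/-- The probability measure whose density with respect to `μ` is proportional to `f`, for a
nonnegative `f` of positive integral; posterior distributions are of this form. -/
def normalized (μ : Measure α) (f : α → ℝ) : Measure α :=
  μ.withDensity fun a => ENNReal.ofReal (f a / ∫ b, f b ∂μ)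

theorem integrable_normalized_iff (hf : 0 ≤ᵐ[μ] f) (hpos : 0 < ∫ a, f a ∂μ) {g : α → ℝ} :
    Integrable g (normalized μ f) ↔ Integrable (fun a => g a * f a) μ := by
  have hm := ((Integrable.of_integral_ne_zero hpos.ne').aemeasurable.div_const
    (∫ b, f b ∂μ)).ennreal_ofReal
  rw [normalized, integrable_withDensity_iff_integrable_smul₀' hm (by simp),
    ← integrable_mul_const_iff (inv_pos.2 hpos).ne'.isUnit fun a => g a * f a]
  refine integrable_congr ?_
  filter_upwards [hf] with a ha
  rw [ENNReal.toReal_ofReal (div_nonneg ha hpos.le), smul_eq_mul]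
  ring

theorem integral_normalized (hf : 0 ≤ᵐ[μ] f) (hpos : 0 < ∫ a, f a ∂μ) (g : α → ℝ) :
    ∫ a, g a ∂normalized μ f = (∫ a, g a * f a ∂μ) / ∫ a, f a ∂μ := by
  have hm := ((Integrable.of_integral_ne_zero hpos.ne').aemeasurable.div_const
    (∫ b, f b ∂μ)).ennreal_ofReal
  rw [normalized, integral_withDensity_eq_integral_toReal_smul₀ hm (by simp), ← integral_div]
  refine integral_congr_ae ?_
  filter_upwards [hf] with a ha
  rw [ENNReal.toReal_ofReal (div_nonneg ha hpos.le), smul_eq_mul]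
  ring

theorem isProbabilityMeasure_normalized (hf : 0 ≤ᵐ[μ] f) (hpos : 0 < ∫ a, f a ∂μ) :
    IsProbabilityMeasure (normalized μ f) := by
  have hfi := Integrable.of_integral_ne_zero hpos.ne'
  refine ⟨?_⟩
  rw [normalized, withDensity_apply _ MeasurableSet.univ, Measure.restrict_univ,
    ← ofReal_integral_eq_lintegral_ofReal (hfi.div_const _)
      (hf.mono fun a ha => div_nonneg ha hpos.le),
    integral_div, div_self hpos.ne', ENNReal.ofReal_one]

theorem measureReal_normalized (hf : 0 ≤ᵐ[μ] f) (hpos : 0 < ∫ a, f a ∂μ) {A : Set α}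
    (hA : MeasurableSet A) :
    (normalized μ f).real A = (∫ a in A, f a ∂μ) / ∫ a, f a ∂μ := by
  rw [← integral_indicator_one hA, integral_normalized hf hpos, ← integral_indicator hA]
  congr 1
  refine integral_congr_ae (.of_forall fun a => ?_)
  by_cases ha : a ∈ A <;> simp [ha]

theorem pi_normalized {ι : Type*} [Fintype ι] {X : ι → Type*} [∀ i, MeasurableSpace (X i)]
    {μ : ∀ i, Measure (X i)} [∀ i, SigmaFinite (μ i)] {f : ∀ i, X i → ℝ}
    (hf : ∀ i x, 0 ≤ f i x) (hpos : ∀ i, 0 < ∫ x, f i x ∂μ i) :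
    Measure.pi (fun i => normalized (μ i) (f i)) =
      normalized (Measure.pi μ) fun x => ∏ i, f i (x i) := by
  have hf' : ∀ i, 0 ≤ᵐ[μ i] f i := fun i => .of_forall (hf i)
  have hprod : 0 ≤ᵐ[Measure.pi μ] fun x => ∏ i, f i (x i) :=
    .of_forall fun x => Finset.prod_nonneg fun i _ => hf i (x i)
  have hprod_pos : 0 < ∫ x, ∏ i, f i (x i) ∂Measure.pi μ := by
    rw [integral_fintype_prod_eq_prod]
    exact Finset.prod_pos fun i _ => hpos i
  have := fun i => isProbabilityMeasure_normalized (hf' i) (hpos i)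
  have := isProbabilityMeasure_normalized hprod hprod_pos
  refine Measure.pi_eq fun s hs => ?_
  rw [← ENNReal.toReal_eq_toReal_iff' (measure_ne_top _ _)
    (ENNReal.prod_ne_top fun i _ => measure_ne_top _ _), ENNReal.toReal_prod]
  change (normalized _ _).real _ = ∏ i, (normalized (μ i) (f i)).real (s i)
  simp only [measureReal_normalized (hf' _) (hpos _) (hs _),
    measureReal_normalized hprod hprod_pos (MeasurableSet.univ_pi hs), Measure.restrict_pi_pi,
    integral_fintype_prod_eq_prod, Finset.prod_div_distrib]

end Normalized

section ProductMeasure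

variable {ι : Type*} [Fintype ι] {X : ι → Type*} [∀ i, MeasurableSpace (X i)]
  {μ : ∀ i, Measure (X i)} [∀ i, IsProbabilityMeasure (μ i)] {f : ∀ i, X i → ℝ}

theorem integrable_sum_eval (hf : ∀ i, Integrable (f i) (μ i)) :
    Integrable (fun x => ∑ i, f i (x i)) (Measure.pi μ) :=
  integrable_finsetSum _ fun i _ => integrable_comp_eval (hf i)

theorem integral_sum_eval (hf : ∀ i, Integrable (f i) (μ i)) :
    ∫ x, ∑ i, f i (x i) ∂Measure.pi μ = ∑ i, ∫ x, f i x ∂μ i := by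
  rw [integral_finsetSum _ fun i _ => integrable_comp_eval (hf i)]
  exact Finset.sum_congr rfl fun i _ => integral_comp_eval (hf i).aestronglyMeasurable

theorem measureReal_pi_lt_sum_le (hf : ∀ i, Integrable (f i) (μ i)) (hf0 : ∀ i x, 0 ≤ f i x)
    {r : ℝ} (hr : 0 < r) :
    (Measure.pi μ).real {x | r < ∑ i, f i (x i)} ≤ (∑ i, ∫ x, f i x ∂μ i) / r := by
  rw [le_div_iff₀' hr, ← integral_sum_eval hf]
  calc r * (Measure.pi μ).real {x | r < ∑ i, f i (x i)}
      ≤ r * (Measure.pi μ).real {x | r ≤ ∑ i, f i (x i)} :=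
        mul_le_mul_of_nonneg_left (measureReal_mono fun x (hx : r < _) => hx.le) hr.le
    _ ≤ _ := mul_meas_ge_le_integral_of_nonneg
        (.of_forall fun x => Finset.sum_nonneg fun i _ => hf0 i (x i)) (integrable_sum_eval hf) r

end ProductMeasure

theorem integral_sub_integral_sq_le {α : Type*} [MeasurableSpace α] {μ : Measure α}
    [IsProbabilityMeasure μ] {f : α → ℝ} (hf : AEStronglyMeasurable f μ) (c : ℝ) :
    ∫ a, (f a - ∫ b, f b ∂μ) ^ 2 ∂μ ≤ ∫ a, (f a - c) ^ 2 ∂μ := by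
  rw [← variance_eq_integral hf.aemeasurable,
    ← variance_sub_const hf c]
  exact variance_le_expectation_sq (hf.sub aestronglyMeasurable_const)

theorem integral_sub_const_sq_gaussianReal (m c : ℝ) (v : NNReal) :
    ∫ θ, (θ - c) ^ 2 ∂gaussianReal m v = v + (m - c) ^ 2 := by
  have h2 : MemLp (fun θ : ℝ => θ - c) 2 (gaussianReal m v) :=
    (memLp_id_gaussianReal' 2 (by simp)).sub (memLp_const c)
  have hid : Integrable (fun θ : ℝ => θ) (gaussianReal m v) :=
    (memLp_id_gaussianReal' 1 (by simp)).integrable le_rfl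
  have hmean : ∫ θ, (θ - c) ∂gaussianReal m v = m - c := by
    rw [integral_sub hid (integrable_const c)]
    simp [integral_id_gaussianReal]
  have hvar := variance_eq_sub h2
  rw [variance_sub_const (X := fun θ : ℝ => θ) aestronglyMeasurable_id,
    variance_fun_id_gaussianReal, hmean] at hvar
  simp only [Pi.pow_apply] at hvar
  linarith

theorem integrable_sub_const_sq_gaussianReal (m c : ℝ) (v : NNReal) :
    Integrable (fun θ => (θ - c) ^ 2) (gaussianReal m v) :=
  ((memLp_id_gaussianReal' 2 (by simp)).sub (memLp_const c)).integrable_sq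

theorem gauss_sub (x θ : ℝ) : gauss (x - θ) = gaussianPDFReal θ 1 x := by
  simp [gauss, gaussianPDFReal]

theorem normalized_gaussianPDFReal (m : ℝ) {v : NNReal} (hv : v ≠ 0) :
    normalized volume (gaussianPDFReal m v) = gaussianReal m v := by
  rw [normalized, integral_gaussianPDFReal_eq_one m hv,
    gaussianReal_of_var_ne_zero m hv]
  simp only [div_one]
  rfl

theorem EN_eq_integral_pi {n : ℕ} (θ : Fin n → ℝ) (f : (Fin n → ℝ) → ℝ) :
    EN n θ f = ∫ x, f x ∂Measure.pi fun i => gaussianReal (θ i) 1 := by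
  have hmass (i : Fin n) : ∫ x, gaussianPDFReal (θ i) 1 x = 1 :=
    integral_gaussianPDFReal_eq_one _ one_ne_zero
  have hprod : ∫ x : Fin n → ℝ, ∏ i, gaussianPDFReal (θ i) 1 (x i) = 1 := by
    simp only [integral_fintype_prod_volume_eq_prod, hmass, Finset.prod_const_one]
  simp only [← normalized_gaussianPDFReal _ one_ne_zero]
  rw [pi_normalized (fun i => gaussianPDFReal_nonneg _ _)
    (fun i => by rw [hmass]; exact one_pos), ← volume_pi, integral_normalized, hprod, div_one]
  · simp only [EN, gauss_sub]
  · exact .of_forall fun x =>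
      Finset.prod_nonneg fun i _ => gaussianPDFReal_nonneg _ _ _
  · rw [hprod]; exact one_pos

/-- The shrinkage factor `1 - κ = tτ² / (1 + tτ²)`: given `λ² = t` and `x`, the coordinate `θ` has
posterior distribution `N(x (1 - κ), 1 - κ)`. -/
def gain (τ t : ℝ) : ℝ := t * τ ^ 2 / (1 + t * τ ^ 2)

theorem gain_nonneg (τ : ℝ) {t : ℝ} (ht : 0 ≤ t) : 0 ≤ gain τ t := by
  unfold gain; positivity

theorem gain_pos {τ t : ℝ} (hτ : 0 < τ) (ht : 0 < t) : 0 < gain τ t := by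
  unfold gain; positivity

theorem one_sub_gain (τ : ℝ) {t : ℝ} (ht : 0 ≤ t) : 1 - gain τ t = 1 / (1 + t * τ ^ 2) := by
  have : 1 + t * τ ^ 2 ≠ 0 := by positivity
  unfold gain
  field_simp
  ring

theorem gain_le_one (τ : ℝ) {t : ℝ} (ht : 0 ≤ t) : gain τ t ≤ 1 := by
  have : 0 ≤ 1 - gain τ t := by rw [one_sub_gain τ ht]; positivity
  linarith

theorem measurable_gain (τ : ℝ) : Measurable (gain τ) := by
  unfold gain; fun_prop

theorem integrableOn_Ioi_rpow_mul_exp_neg_div {s c : ℝ} (hs : 0 < s) (hc : 0 < c) :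
    IntegrableOn (fun u : ℝ => u ^ (-s - 1) * Real.exp (-c / u)) (Ioi 0) := by
  have h : IntegrableOn (fun y : ℝ => y ^ (s - 1) * Real.exp (-c * y ^ (1 : ℝ))) (Ioi 0) :=
    integrableOn_rpow_mul_exp_neg_mul_rpow (by linarith) one_pos hc
  rw [← integrableOn_Ioi_comp_rpow_iff' _ (neg_ne_zero.2 one_ne_zero)] at h
  refine h.congr_fun (fun u (hu : 0 < u) => ?_) measurableSet_Ioi
  simp only [smul_eq_mul, Real.rpow_one]
  rw [Real.rpow_neg_one, Real.inv_rpow hu.le, ← Real.rpow_neg hu.le, ← mul_assoc,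
    ← Real.rpow_add hu, div_eq_mul_inv]
  ring_nf

namespace Prior

variable (P : Prior)

/-- The prior density of `λ²` up to the normalizing constant `K`. -/
def mixingDensity (t : ℝ) : ℝ := t ^ (-P.a - 1) * P.L t

/-- The prior on `λ²` has finite mass. The structure `Prior` does not impose this, and without it
every posterior integral is the junk value `0`. -/
def Proper : Prop := IntegrableOn P.mixingDensity (Ioi 0)

theorem mixingDensity_nonneg {t : ℝ} (ht : 0 < t) : 0 ≤ P.mixingDensity t := by
  have := P.L_pos t ht
  unfold mixingDensity; positivity

theorem measurable_mixingDensity : Measurable P.mixingDensity := by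
  have := P.L_meas
  unfold mixingDensity; fun_prop

theorem integrableOn_Ioi_one_mixingDensity : IntegrableOn P.mixingDensity (Ioi 1) := by
  refine ((integrableOn_Ioi_rpow_of_lt (a := -P.a - 1) (by linarith [P.a_pos])
    one_pos).mul_const P.M).mono' P.measurable_mixingDensity.aestronglyMeasurable ?_
  filter_upwards [ae_restrict_mem measurableSet_Ioi] with t ht
  have ht0 : 0 < t := one_pos.trans ht
  rw [Real.norm_of_nonneg (P.mixingDensity_nonneg ht0)]
  exact mul_le_mul_of_nonneg_left (P.L_le t ht0) (by positivity)

end Prior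

section Weight

variable (P : Prior)

theorem measurable_wt (x τ : ℝ) : Measurable (wt P x τ) := by
  have := P.L_meas
  unfold wt; fun_prop

theorem wt_pos (x τ : ℝ) {t : ℝ} (ht : 0 < t) : 0 < wt P x τ t := by
  have := P.L_pos t ht
  unfold wt; positivity

theorem wt_eq_mul_mixingDensity (x τ t : ℝ) :
    wt P x τ t = (1 + t * τ ^ 2) ^ (-(1:ℝ) / 2) * Real.exp (-x ^ 2 / (2 * (1 + t * τ ^ 2))) *
      P.mixingDensity t := by
  unfold wt Prior.mixingDensity; ring

theorem wt_le_exp_mul_mixingDensity (x τ : ℝ) {t : ℝ} (ht : 0 < t) :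
    wt P x τ t ≤ Real.exp (-x ^ 2 / (2 * (1 + t * τ ^ 2))) * P.mixingDensity t := by
  have hpow : (1 + t * τ ^ 2) ^ (-(1:ℝ) / 2) ≤ 1 :=
    Real.rpow_le_one_of_one_le_of_nonpos (by nlinarith [mul_nonneg ht.le (sq_nonneg τ)])
      (by norm_num)
  have := P.mixingDensity_nonneg ht
  rw [wt_eq_mul_mixingDensity]
  exact mul_le_mul_of_nonneg_right (mul_le_of_le_one_left (by positivity) hpow) this

theorem wt_le_mixingDensity (x τ : ℝ) {t : ℝ} (ht : 0 < t) : wt P x τ t ≤ P.mixingDensity t := by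
  refine (wt_le_exp_mul_mixingDensity P x τ ht).trans
    (mul_le_of_le_one_left (P.mixingDensity_nonneg ht) ?_)
  rw [Real.exp_le_one_iff, neg_div, neg_nonpos]
  positivity

theorem exp_neg_sq_mul_wt_zero_le {x τ t : ℝ} (ht : 0 < t) {σ : ℝ} (hσ : τ ^ 2 ≤ σ ^ 2) :
    Real.exp (-x ^ 2 / 2) * wt P 0 σ t ≤ wt P x τ t := by
  have hmono : 1 + t * τ ^ 2 ≤ 1 + t * σ ^ 2 := by gcongr
  have hone : 0 < 1 + t * τ ^ 2 := by positivity
  have hpow : (1 + t * σ ^ 2) ^ (-(1:ℝ) / 2) ≤ (1 + t * τ ^ 2) ^ (-(1:ℝ) / 2) :=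
    Real.rpow_le_rpow_of_nonpos hone hmono (by norm_num)
  have hexp : Real.exp (-x ^ 2 / 2) ≤ Real.exp (-x ^ 2 / (2 * (1 + t * τ ^ 2))) := by
    rw [Real.exp_le_exp, neg_div, neg_div, neg_le_neg_iff]
    exact div_le_div_of_nonneg_left (sq_nonneg x) two_pos (by nlinarith [sq_nonneg τ])
  have hdens := P.mixingDensity_nonneg ht
  simp only [wt_eq_mul_mixingDensity, ne_eq, OfNat.ofNat_ne_zero, not_false_eq_true, zero_pow,
    neg_zero, zero_div, Real.exp_zero, mul_one]
  calc _ = (1 + t * σ ^ 2) ^ (-(1:ℝ) / 2) * Real.exp (-x ^ 2 / 2) * P.mixingDensity t := by ring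
    _ ≤ _ := by gcongr

theorem integrableOn_wt_iff (x τ : ℝ) : IntegrableOn (wt P x τ) (Ioi 0) ↔ P.Proper := by
  refine ⟨fun h => ?_, fun h => h.mono' (measurable_wt P x τ).aestronglyMeasurable ?_⟩
  · rw [Prior.Proper, ← Ioc_union_Ioi_eq_Ioi (zero_le_one' ℝ)]
    refine IntegrableOn.union ?_ P.integrableOn_Ioi_one_mixingDensity
    have hwt : IntegrableOn (wt P x τ) (Ioc 0 1) := h.mono_set Ioc_subset_Ioi_self
    refine (hwt.const_mul ((1 + τ ^ 2) ^ ((1:ℝ) / 2) * Real.exp (x ^ 2 / 2))).mono'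
      P.measurable_mixingDensity.aestronglyMeasurable ?_
    filter_upwards [ae_restrict_mem measurableSet_Ioc] with t ht
    have hone : 0 < 1 + t * τ ^ 2 := by have := ht.1; positivity
    have hwt0 : P.mixingDensity t = (1 + t * τ ^ 2) ^ ((1:ℝ) / 2) * wt P 0 τ t := by
      simp [wt_eq_mul_mixingDensity, neg_div, Real.rpow_neg hone.le,
        (Real.rpow_pos_of_pos hone _).ne']
    have hpow : (1 + t * τ ^ 2) ^ ((1:ℝ) / 2) ≤ (1 + τ ^ 2) ^ ((1:ℝ) / 2) :=
      Real.rpow_le_rpow hone.le (by nlinarith [ht.2, sq_nonneg τ]) (by norm_num)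
    have hexp : wt P 0 τ t ≤ Real.exp (x ^ 2 / 2) * wt P x τ t := by
      have := exp_neg_sq_mul_wt_zero_le P (x := x) ht.1 (le_refl (τ ^ 2))
      rwa [neg_div, Real.exp_neg, inv_mul_le_iff₀ (Real.exp_pos _)] at this
    rw [Real.norm_of_nonneg (P.mixingDensity_nonneg ht.1), mul_assoc, hwt0]
    exact mul_le_mul hpow hexp (wt_pos P 0 τ ht.1).le (by positivity)
  · filter_upwards [ae_restrict_mem measurableSet_Ioi] with t ht
    rw [Real.norm_of_nonneg (wt_pos P x τ ht).le]
    exact wt_le_mixingDensity P x τ ht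

end Weight

theorem exp_mul_gaussian_eq (x : ℝ) {s : ℝ} (hs : 0 < s) (θ : ℝ) :
    Real.exp (-(x - θ) ^ 2 / 2) * ((Real.sqrt (2 * Real.pi * s))⁻¹ * Real.exp (-θ ^ 2 / (2 * s))) =
      (1 + s) ^ (-(1:ℝ) / 2) * Real.exp (-x ^ 2 / (2 * (1 + s))) *
        gaussianPDFReal (x * (s / (1 + s))) (s / (1 + s)).toNNReal θ := by
  have hpow : (1 + s) ^ (-(1:ℝ) / 2) = (Real.sqrt (1 + s))⁻¹ := by
    rw [neg_div, Real.rpow_neg (by positivity), Real.sqrt_eq_rpow]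
  have hsqrt : Real.sqrt (2 * Real.pi * (s / (1 + s))) =
      Real.sqrt (2 * Real.pi * s) / Real.sqrt (1 + s) := by
    rw [← Real.sqrt_div (by positivity), mul_div_assoc]
  have hexp : Real.exp (-(x - θ) ^ 2 / 2) * Real.exp (-θ ^ 2 / (2 * s)) =
      Real.exp (-x ^ 2 / (2 * (1 + s))) *
        Real.exp (-(θ - x * (s / (1 + s))) ^ 2 / (2 * (s / (1 + s)))) := by
    rw [← Real.exp_add, ← Real.exp_add]
    congr 1
    field_simp
    ring
  have h1 : Real.sqrt (1 + s) ≠ 0 := by positivity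
  rw [gaussianPDFReal, Real.coe_toNNReal _ (by positivity), hpow, hsqrt]
  calc _ = (Real.sqrt (2 * Real.pi * s))⁻¹ *
        (Real.exp (-(x - θ) ^ 2 / 2) * Real.exp (-θ ^ 2 / (2 * s))) := by ring
    _ = _ := by rw [hexp]; field_simp

/-- The posterior distribution `N(x (1 - κ), 1 - κ)` of `θ` given `x` and `λ² = u`. -/
def conditional (τ x u : ℝ) : Measure ℝ := gaussianReal (x * gain τ u) (gain τ u).toNNReal

section JointDensity

variable (P : Prior)

/-- The unnormalized joint posterior density of `(θ, λ²)` given `x`, in the variables `θ` and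
`u = λ²`. -/
def joint (τ x θ u : ℝ) : ℝ :=
  Real.exp (-(x - θ) ^ 2 / 2) *
    ((Real.sqrt (2 * Real.pi * u * τ ^ 2))⁻¹ * Real.exp (-θ ^ 2 / (2 * u * τ ^ 2)) *
      (P.K * u ^ (-P.a - 1) * P.L u))

theorem postw_eq_integral_joint (τ x θ : ℝ) : postw P τ x θ = ∫ u in Ioi 0, joint P τ x θ u :=
  (integral_const_mul _ _).symm

theorem measurable_joint (τ x : ℝ) : Measurable fun z : ℝ × ℝ => joint P τ x z.1 z.2 := by
  have := P.L_meas
  unfold joint; fun_prop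

theorem joint_nonneg (τ x θ : ℝ) {u : ℝ} (hu : 0 < u) : 0 ≤ joint P τ x θ u := by
  have := P.K_pos
  have := P.L_pos u hu
  unfold joint; positivity

theorem postw_nonneg (τ x θ : ℝ) : 0 ≤ postw P τ x θ := by
  rw [postw_eq_integral_joint]
  exact setIntegral_nonneg measurableSet_Ioi fun u hu => joint_nonneg P τ x θ hu

section Joint

variable {τ u : ℝ}

theorem joint_eq_wt_mul (hτ : 0 < τ) (hu : 0 < u) (x θ : ℝ) :
    joint P τ x θ u =
      P.K * wt P x τ u * gaussianPDFReal (x * gain τ u) (gain τ u).toNNReal θ := by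
  have := exp_mul_gaussian_eq x (s := u * τ ^ 2) (by positivity) θ
  unfold joint wt gain
  rw [mul_assoc (2 * Real.pi), mul_assoc 2 u, ← mul_assoc (Real.exp _), this]
  ring

theorem normalized_gain_eq_conditional (hτ : 0 < τ) (hu : 0 < u) (x : ℝ) :
    normalized volume (gaussianPDFReal (x * gain τ u) (gain τ u).toNNReal) = conditional τ x u :=
  normalized_gaussianPDFReal _ (by simpa using gain_pos hτ hu)

theorem integrable_mul_joint (hτ : 0 < τ) (hu : 0 < u) {x : ℝ} {g : ℝ → ℝ}
    (hg : Integrable g (conditional τ x u)) :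
    Integrable fun θ => g θ * joint P τ x θ u := by
  have hmass := integral_gaussianPDFReal_eq_one (x * gain τ u)
    (v := (gain τ u).toNNReal) (by simpa using gain_pos hτ hu)
  rw [← normalized_gain_eq_conditional hτ hu, integrable_normalized_iff
    (.of_forall (gaussianPDFReal_nonneg _ _)) (by rw [hmass]; exact one_pos)]
    at hg
  refine (hg.const_mul (P.K * wt P x τ u)).congr (.of_forall fun θ => ?_)
  simp only [joint_eq_wt_mul P hτ hu]
  ring

theorem integral_mul_joint (hτ : 0 < τ) (hu : 0 < u) (x : ℝ) (g : ℝ → ℝ) :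
    ∫ θ, g θ * joint P τ x θ u = P.K * ((∫ θ, g θ ∂conditional τ x u) * wt P x τ u) := by
  have hmass := integral_gaussianPDFReal_eq_one (x * gain τ u)
    (v := (gain τ u).toNNReal) (by simpa using gain_pos hτ hu)
  rw [← normalized_gain_eq_conditional hτ hu, integral_normalized
    (.of_forall (gaussianPDFReal_nonneg _ _)) (by rw [hmass]; exact one_pos),
    hmass, div_one, ← integral_mul_const, ← integral_const_mul]
  simp only [joint_eq_wt_mul P hτ hu]
  exact integral_congr_ae (.of_forall fun θ => by ring)

end Joint

section Tonelli

variable {P} {τ x : ℝ} {g : ℝ → ℝ}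

theorem integrable_mul_joint_prod_iff (hτ : 0 < τ) (hg : Measurable g) (hg0 : ∀ θ, 0 ≤ g θ)
    (hgi : ∀ u, 0 < u → Integrable g (conditional τ x u)) :
    Integrable (fun z : ℝ × ℝ => g z.1 * joint P τ x z.1 z.2)
        (volume.prod (volume.restrict (Ioi 0))) ↔
      IntegrableOn (fun u => (∫ θ, g θ ∂conditional τ x u) * wt P x τ u) (Ioi 0) := by
  have hm : AEStronglyMeasurable (fun z : ℝ × ℝ => g z.1 * joint P τ x z.1 z.2)
      (volume.prod (volume.restrict (Ioi 0))) :=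
    ((hg.comp measurable_fst).mul (measurable_joint P τ x)).aestronglyMeasurable
  have hslice : ∀ᵐ u ∂volume.restrict (Ioi 0), Integrable fun θ => g θ * joint P τ x θ u := by
    filter_upwards [ae_restrict_mem measurableSet_Ioi] with u hu
    exact integrable_mul_joint P hτ hu (hgi u hu)
  have hnorm : (fun u => ∫ θ, ‖g θ * joint P τ x θ u‖) =ᵐ[volume.restrict (Ioi 0)]
      fun u => P.K * ((∫ θ, g θ ∂conditional τ x u) * wt P x τ u) := by
    filter_upwards [ae_restrict_mem measurableSet_Ioi] with u hu
    rw [← integral_mul_joint P hτ hu]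
    exact integral_congr_ae (.of_forall fun θ =>
      Real.norm_of_nonneg (mul_nonneg (hg0 θ) (joint_nonneg P τ x θ hu)))
  rw [integrable_prod_iff' hm, and_iff_right hslice, integrable_congr hnorm,
    integrable_const_mul_iff P.K_pos.ne'.isUnit, IntegrableOn]

theorem integrableOn_joint (hτ : 0 < τ) {θ : ℝ} (hθ : θ ≠ 0) :
    IntegrableOn (joint P τ x θ) (Ioi 0) := by
  have ha := P.a_pos
  have hK := P.K_pos
  set A := Real.exp (-(x - θ) ^ 2 / 2) * (Real.sqrt (2 * Real.pi * τ ^ 2))⁻¹ * P.K * P.M with hA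
  refine ((integrableOn_Ioi_rpow_mul_exp_neg_div (s := P.a + 1 / 2) (c := θ ^ 2 / (2 * τ ^ 2))
    (by linarith) (by positivity)).const_mul A).mono'
    ((measurable_joint P τ x).comp measurable_prodMk_left).aestronglyMeasurable ?_
  filter_upwards [ae_restrict_mem measurableSet_Ioi] with u hu
  have hu : 0 < u := hu
  have hL := P.L_le u hu
  have hpow : u ^ (-(P.a + 1 / 2) - 1) = (Real.sqrt u)⁻¹ * u ^ (-P.a - 1) := by
    rw [Real.sqrt_eq_rpow, ← Real.rpow_neg hu.le, ← Real.rpow_add hu]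
    ring_nf
  have hsqrt : Real.sqrt (2 * Real.pi * u * τ ^ 2) =
      Real.sqrt (2 * Real.pi * τ ^ 2) * Real.sqrt u := by
    rw [← Real.sqrt_mul (by positivity)]
    ring_nf
  have hexp : -(θ ^ 2 / (2 * τ ^ 2)) / u = -θ ^ 2 / (2 * u * τ ^ 2) := by field_simp
  rw [Real.norm_of_nonneg (joint_nonneg P τ x θ hu), hpow, hexp, hA, joint, hsqrt]
  calc _ ≤ Real.exp (-(x - θ) ^ 2 / 2) * ((Real.sqrt (2 * Real.pi * τ ^ 2) * Real.sqrt u)⁻¹ *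
        Real.exp (-θ ^ 2 / (2 * u * τ ^ 2)) * (P.K * u ^ (-P.a - 1) * P.M)) := by gcongr
    _ = _ := by rw [mul_inv]; ring

theorem integrable_postw_iff (hτ : 0 < τ) : Integrable (postw P τ x) ↔ P.Proper := by
  have hprod := integrable_mul_joint_prod_iff (P := P) (x := x) (g := fun _ => 1) hτ
    measurable_const (fun _ => zero_le_one) fun u _ => by
      unfold conditional; exact integrable_const 1
  have hone (u : ℝ) : ∫ _, (1 : ℝ) ∂conditional τ x u = 1 := by simp [conditional]
  simp only [one_mul, hone] at hprod
  rw [← integrableOn_wt_iff P x τ, ← hprod,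
    integrable_prod_iff (measurable_joint P τ x).aestronglyMeasurable, and_iff_right]
  · refine integrable_congr (.of_forall fun θ => ?_)
    rw [postw_eq_integral_joint]
    exact setIntegral_congr_fun measurableSet_Ioi fun u hu =>
      (Real.norm_of_nonneg (joint_nonneg P τ x θ hu)).symm
  · filter_upwards [Measure.ae_ne volume 0] with θ hθ using integrableOn_joint hτ hθ

theorem integrable_mul_postw (hτ : 0 < τ) (hg : Measurable g) (hg0 : ∀ θ, 0 ≤ g θ)
    (hgi : ∀ u, 0 < u → Integrable g (conditional τ x u))
    (hwt : IntegrableOn (fun u => (∫ θ, g θ ∂conditional τ x u) * wt P x τ u) (Ioi 0)) :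
    Integrable fun θ => g θ * postw P τ x θ := by
  simp only [postw_eq_integral_joint, ← integral_const_mul]
  exact ((integrable_mul_joint_prod_iff hτ hg hg0 hgi).2 hwt).integral_prod_left

theorem integral_mul_postw (hτ : 0 < τ) (hg : Measurable g) (hg0 : ∀ θ, 0 ≤ g θ)
    (hgi : ∀ u, 0 < u → Integrable g (conditional τ x u))
    (hwt : IntegrableOn (fun u => (∫ θ, g θ ∂conditional τ x u) * wt P x τ u) (Ioi 0)) :
    ∫ θ, g θ * postw P τ x θ =
      P.K * ∫ u in Ioi 0, (∫ θ, g θ ∂conditional τ x u) * wt P x τ u := by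
  simp only [postw_eq_integral_joint, ← integral_const_mul]
  rw [integral_integral_swap ((integrable_mul_joint_prod_iff hτ hg hg0 hgi).2 hwt)]
  exact setIntegral_congr_fun measurableSet_Ioi fun u hu => integral_mul_joint P hτ hu x g

end Tonelli

end JointDensity

section MixingPosterior

variable (P : Prior)

theorem ae_restrict_wt_nonneg (x τ : ℝ) : 0 ≤ᵐ[volume.restrict (Ioi 0)] wt P x τ := by
  filter_upwards [ae_restrict_mem measurableSet_Ioi] with t ht using (wt_pos P x τ ht).le

/-- The posterior distribution of one coordinate `θ` given its observation `x`. -/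
def posterior (τ x : ℝ) : Measure ℝ := normalized volume (postw P τ x)

/-- The posterior distribution of the local variance `λ²` given `x`. -/
def mixingPosterior (τ x : ℝ) : Measure ℝ := normalized (volume.restrict (Ioi 0)) (wt P x τ)

variable {P}

theorem integral_wt_pos (hP : P.Proper) (x τ : ℝ) : 0 < ∫ t in Ioi 0, wt P x τ t := by
  rw [setIntegral_pos_iff_support_of_nonneg_ae (ae_restrict_wt_nonneg P x τ)
    ((integrableOn_wt_iff P x τ).2 hP)]
  have : Ioi (0:ℝ) ⊆ Function.support (wt P x τ) := fun t ht => (wt_pos P x τ ht).ne'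
  rw [inter_eq_self_of_subset_right this, Real.volume_Ioi]
  exact ENNReal.coe_lt_top

theorem isProbabilityMeasure_mixingPosterior (hP : P.Proper) (τ x : ℝ) :
    IsProbabilityMeasure (mixingPosterior P τ x) :=
  isProbabilityMeasure_normalized (ae_restrict_wt_nonneg P x τ) (integral_wt_pos hP x τ)

theorem integral_mixingPosterior (hP : P.Proper) (τ x : ℝ) (g : ℝ → ℝ) :
    ∫ t, g t ∂mixingPosterior P τ x =
      (∫ t in Ioi 0, g t * wt P x τ t) / ∫ t in Ioi 0, wt P x τ t :=
  integral_normalized (ae_restrict_wt_nonneg P x τ) (integral_wt_pos hP x τ) g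

theorem integrable_mixingPosterior_iff (hP : P.Proper) {τ x : ℝ} {g : ℝ → ℝ} :
    Integrable g (mixingPosterior P τ x) ↔ IntegrableOn (fun t => g t * wt P x τ t) (Ioi 0) :=
  integrable_normalized_iff (ae_restrict_wt_nonneg P x τ) (integral_wt_pos hP x τ)

theorem ae_mixingPosterior_pos (τ x : ℝ) : ∀ᵐ t ∂mixingPosterior P τ x, 0 < t :=
  (withDensity_absolutelyContinuous _ _).ae_le (ae_restrict_mem measurableSet_Ioi)

theorem memLp_gain (hP : P.Proper) (τ x : ℝ) (p : ENNReal) :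
    MemLp (gain τ) p (mixingPosterior P τ x) := by
  have := isProbabilityMeasure_mixingPosterior hP τ x
  refine .of_bound (measurable_gain τ).aestronglyMeasurable 1 ?_
  filter_upwards [ae_mixingPosterior_pos τ x] with t ht
  rw [Real.norm_of_nonneg (gain_nonneg τ ht.le)]
  exact gain_le_one τ ht.le

theorem integrable_gain (hP : P.Proper) (τ x : ℝ) : Integrable (gain τ) (mixingPosterior P τ x) :=
  memLp_one_iff_integrable.1 (memLp_gain hP τ x 1)

theorem integrable_gain_sub_const_sq (hP : P.Proper) (τ x c : ℝ) :
    Integrable (fun t => (gain τ t - c) ^ 2) (mixingPosterior P τ x) := by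
  have := isProbabilityMeasure_mixingPosterior hP τ x
  exact ((memLp_gain hP τ x 2).sub (memLp_const c)).integrable_sq

theorem T_eq_mul_integral_gain (hP : P.Proper) (τ x : ℝ) :
    T P τ x = x * ∫ t, gain τ t ∂mixingPosterior P τ x := by
  have := isProbabilityMeasure_mixingPosterior hP τ x
  have hκ : (fun t => 1 - gain τ t) =ᵐ[mixingPosterior P τ x] fun t => 1 / (1 + t * τ ^ 2) := by
    filter_upwards [ae_mixingPosterior_pos τ x] with t ht using one_sub_gain τ ht.le
  rw [T, postExp, ← integral_mixingPosterior hP, ← integral_congr_ae hκ,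
    integral_sub (integrable_const 1) (integrable_gain hP τ x)]
  simp

section Posterior

variable {τ : ℝ}

theorem integral_postw (hP : P.Proper) (hτ : 0 < τ) (x : ℝ) :
    ∫ θ, postw P τ x θ = P.K * ∫ t in Ioi 0, wt P x τ t := by
  have hone (u : ℝ) : ∫ _, (1 : ℝ) ∂conditional τ x u = 1 := by simp [conditional]
  have h := integral_mul_postw (P := P) (x := x) (g := fun _ => 1) hτ measurable_const
    (fun _ => zero_le_one) (fun u _ => by unfold conditional; exact integrable_const 1)
    (by simpa only [hone, one_mul] using (integrableOn_wt_iff P x τ).2 hP)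
  simpa only [hone, one_mul] using h

theorem integral_postw_pos (hP : P.Proper) (hτ : 0 < τ) (x : ℝ) : 0 < ∫ θ, postw P τ x θ := by
  rw [integral_postw hP hτ]
  exact mul_pos P.K_pos (integral_wt_pos hP x τ)

theorem isProbabilityMeasure_posterior (hP : P.Proper) (hτ : 0 < τ) (x : ℝ) :
    IsProbabilityMeasure (posterior P τ x) :=
  isProbabilityMeasure_normalized (.of_forall (postw_nonneg P τ x)) (integral_postw_pos hP hτ x)

theorem postProb_eq_pi_posterior (hP : P.Proper) (hτ : 0 < τ) {n : ℕ} (x : Fin n → ℝ)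
    {A : Set (Fin n → ℝ)} (hA : MeasurableSet A) :
    postProb P τ x A = (Measure.pi fun i => posterior P τ (x i)).real A := by
  unfold posterior
  rw [pi_normalized (fun i => postw_nonneg P τ (x i)) fun i => integral_postw_pos hP hτ (x i),
    ← volume_pi, measureReal_normalized _ _ hA, postProb]
  · exact .of_forall fun θ => Finset.prod_nonneg fun i _ => postw_nonneg P τ (x i) (θ i)
  · rw [integral_fintype_prod_volume_eq_prod]
    exact Finset.prod_pos fun i _ => integral_postw_pos hP hτ (x i)

theorem postProb_of_not_proper (hP : ¬P.Proper) (hτ : 0 < τ) {n : ℕ} (hn : 0 < n)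
    (x : Fin n → ℝ) (A : Set (Fin n → ℝ)) : postProb P τ x A = 0 := by
  have hzero : ∫ θ : Fin n → ℝ, ∏ i, postw P τ (x i) (θ i) = 0 := by
    rw [integral_fintype_prod_volume_eq_prod]
    exact Finset.prod_eq_zero (Finset.mem_univ ⟨0, hn⟩)
      (integral_undef fun h => hP ((integrable_postw_iff hτ).1 h))
  rw [postProb, hzero, div_zero]

theorem integral_sub_const_sq_conditional (x c : ℝ) {u : ℝ} (hu : 0 ≤ u) :
    ∫ θ, (θ - c) ^ 2 ∂conditional τ x u = gain τ u + (x * gain τ u - c) ^ 2 := by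
  rw [conditional, integral_sub_const_sq_gaussianReal, Real.coe_toNNReal _ (gain_nonneg τ hu)]

theorem integrable_sub_const_sq_conditional (x c u : ℝ) :
    Integrable (fun θ => (θ - c) ^ 2) (conditional τ x u) :=
  integrable_sub_const_sq_gaussianReal _ _ _

theorem integrableOn_integral_sub_const_sq_conditional_mul_wt (hP : P.Proper) (x c : ℝ) :
    IntegrableOn (fun u => (∫ θ, (θ - c) ^ 2 ∂conditional τ x u) * wt P x τ u) (Ioi 0) := by
  have := isProbabilityMeasure_mixingPosterior hP τ x
  rw [← integrable_mixingPosterior_iff hP]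
  refine ((integrable_gain hP τ x).add
    (((memLp_gain hP τ x 2).const_mul x).sub (memLp_const c)).integrable_sq).congr ?_
  filter_upwards [ae_mixingPosterior_pos τ x] with u hu
  exact (integral_sub_const_sq_conditional x c hu.le).symm

theorem integrable_sub_const_sq_posterior (hP : P.Proper) (hτ : 0 < τ) (x c : ℝ) :
    Integrable (fun θ => (θ - c) ^ 2) (posterior P τ x) :=
  (integrable_normalized_iff (.of_forall (postw_nonneg P τ x)) (integral_postw_pos hP hτ x)).2 <|
    integrable_mul_postw hτ (by fun_prop) (fun _ => sq_nonneg _)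
      (fun u _ => integrable_sub_const_sq_conditional x c u)
      (integrableOn_integral_sub_const_sq_conditional_mul_wt hP x c)

theorem integral_sub_const_sq_posterior (hP : P.Proper) (hτ : 0 < τ) (x c : ℝ) :
    ∫ θ, (θ - c) ^ 2 ∂posterior P τ x =
      ∫ t, (gain τ t + (x * gain τ t - c) ^ 2) ∂mixingPosterior P τ x := by
  rw [posterior,
    integral_normalized (.of_forall (postw_nonneg P τ x)) (integral_postw_pos hP hτ x),
    integral_mul_postw hτ (by fun_prop) (fun _ => sq_nonneg _)
      (fun u _ => integrable_sub_const_sq_conditional x c u)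
      (integrableOn_integral_sub_const_sq_conditional_mul_wt hP x c),
    integral_postw hP hτ, mul_div_mul_left _ _ P.K_pos.ne', ← integral_mixingPosterior hP]
  refine integral_congr_ae ?_
  filter_upwards [ae_mixingPosterior_pos τ x] with u hu
  exact integral_sub_const_sq_conditional x c hu.le

/-- The posterior mean squared distance of `θ` to the Bayes estimate `T`, which is the posterior
variance of `θ` since `T` is the posterior mean. -/
def spread (P : Prior) (τ x : ℝ) : ℝ := ∫ θ, (θ - T P τ x) ^ 2 ∂posterior P τ x

/-- The posterior variance of `θ` is `E(1 - κ) + x² Var(1 - κ)`, and the variance of `1 - κ` is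
smallest around its mean, so the centre `c` can be adapted to the size of `x`. -/
theorem spread_le_integral_gain_add (hP : P.Proper) (hτ : 0 < τ) (x c : ℝ) :
    spread P τ x ≤ ∫ t, (gain τ t + x ^ 2 * (gain τ t - c) ^ 2) ∂mixingPosterior P τ x := by
  have := isProbabilityMeasure_mixingPosterior hP τ x
  have hg := integrable_gain hP τ x
  have hsq (b : ℝ) := (integrable_gain_sub_const_sq hP τ x b).const_mul (x ^ 2)
  rw [spread, integral_sub_const_sq_posterior hP hτ, T_eq_mul_integral_gain hP]
  simp only [← mul_sub, mul_pow]
  rw [integral_add hg (hsq _), integral_add hg (hsq c), integral_const_mul, integral_const_mul]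
  exact add_le_add_right (mul_le_mul_of_nonneg_left
    (integral_sub_integral_sq_le hg.aestronglyMeasurable c) (sq_nonneg x)) _

end Posterior

end MixingPosterior

theorem pow_mul_exp_neg_le {y : ℝ} (hy : 0 ≤ y) (k : ℕ) :
    y ^ k * Real.exp (-y) ≤ k.factorial := by
  rw [Real.exp_neg, ← div_eq_mul_inv, div_le_iff₀ (Real.exp_pos y),
    ← div_le_iff₀' (by exact_mod_cast k.factorial_pos)]
  exact Real.pow_div_factorial_le_exp y hy k

theorem sq_mul_exp_neg_div_le {y s : ℝ} (hy : 1 ≤ y) (hs : 1 < s * y) :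
    y ^ 2 * Real.exp (-y / (2 * (1 + s))) ≤ 6144 * s ^ 2 := by
  have hs0 : 0 < s := by
    by_contra h
    nlinarith
  rcases le_total 1 s with h1 | h1
  · have h := pow_mul_exp_neg_le (y := y / (2 * (1 + s))) (by positivity) 2
    calc y ^ 2 * Real.exp (-y / (2 * (1 + s)))
        = (2 * (1 + s)) ^ 2 * ((y / (2 * (1 + s))) ^ 2 * Real.exp (-(y / (2 * (1 + s))))) := by
          rw [neg_div]; field_simp
      _ ≤ (2 * (1 + s)) ^ 2 * (Nat.factorial 2 : ℕ) := by gcongr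
      _ ≤ 6144 * s ^ 2 := by norm_num [Nat.factorial]; nlinarith
  · have h := pow_mul_exp_neg_le (y := y / 4) (by positivity) 4
    have hexp : Real.exp (-y / (2 * (1 + s))) ≤ Real.exp (-(y / 4)) := by
      rw [Real.exp_le_exp, neg_div, neg_le_neg_iff]
      exact div_le_div_of_nonneg_left (by linarith) (by positivity) (by linarith)
    calc y ^ 2 * Real.exp (-y / (2 * (1 + s))) ≤ y ^ 2 * Real.exp (-(y / 4)) := by gcongr
      _ ≤ y ^ 2 * Real.exp (-(y / 4)) * (s * y) ^ 2 :=
          le_mul_of_one_le_right (by positivity) (one_le_pow₀ hs.le)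
      _ = 256 * s ^ 2 * ((y / 4) ^ 4 * Real.exp (-(y / 4))) := by ring
      _ ≤ 256 * s ^ 2 * (Nat.factorial 4 : ℕ) := by gcongr
      _ = 6144 * s ^ 2 := by norm_num [Nat.factorial]; ring

section Gain

variable {τ : ℝ}

theorem hasDerivAt_gain (τ : ℝ) {t : ℝ} (ht : 0 ≤ t) :
    HasDerivAt (gain τ) (τ ^ 2 / (1 + t * τ ^ 2) ^ 2) t := by
  have hlin : HasDerivAt (fun t => t * τ ^ 2) (τ ^ 2) t := by
    simpa using (hasDerivAt_id t).mul_const (τ ^ 2)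
  refine (hlin.div (hlin.const_add 1) (by positivity)).congr_deriv ?_
  ring

theorem tendsto_gain_atTop (hτ : 0 < τ) : Tendsto (gain τ) atTop (nhds 1) := by
  have hlin : Tendsto (fun t : ℝ => 1 + t * τ ^ 2) atTop atTop :=
    tendsto_atTop_add_const_left _ _ (tendsto_id.atTop_mul_const (by positivity))
  have hκ : Tendsto (fun t : ℝ => 1 - 1 / (1 + t * τ ^ 2)) atTop (nhds 1) := by
    simpa using (tendsto_inv_atTop_zero.comp hlin).const_sub 1
  refine hκ.congr' ?_
  filter_upwards [eventually_ge_atTop 0] with t ht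
  rw [← one_sub_gain τ ht]
  ring

theorem integrableOn_deriv_gain (hτ : 0 < τ) :
    IntegrableOn (fun t : ℝ => τ ^ 2 / (1 + t * τ ^ 2) ^ 2) (Ioi 0) :=
  integrableOn_Ioi_deriv_of_nonneg' (fun _ ht => hasDerivAt_gain τ ht)
    (fun t _ => by positivity) (tendsto_gain_atTop hτ)

theorem integral_deriv_gain (hτ : 0 < τ) :
    ∫ t in Ioi (0:ℝ), τ ^ 2 / (1 + t * τ ^ 2) ^ 2 = 1 := by
  rw [integral_Ioi_of_hasDerivAt_of_nonneg' (fun _ ht => hasDerivAt_gain τ ht)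
    (fun t _ => by positivity) (tendsto_gain_atTop hτ)]
  simp [gain]

/-- A primitive of `(q + x² q²) · wt` for `a = 1 / 2` and `L = 1`, where `q = gain τ t`. -/
def gainPrimitive (x τ t : ℝ) : ℝ :=
  2 * τ * (Real.sqrt (gain τ t) * Real.exp (-x ^ 2 / 2 * (1 - gain τ t)))

theorem hasDerivAt_gainPrimitive (x : ℝ) (hτ : 0 < τ) {t : ℝ} (ht : 0 < t) :
    HasDerivAt (gainPrimitive x τ)
      ((gain τ t + x ^ 2 * gain τ t ^ 2) * ((1 + t * τ ^ 2) ^ (-(1:ℝ) / 2) * t ^ (-(1:ℝ) / 2 - 1) *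
        Real.exp (-x ^ 2 / (2 * (1 + t * τ ^ 2))))) t := by
  have hderiv := (((hasDerivAt_gain τ ht.le).sqrt (gain_pos hτ ht).ne').mul
    (((hasDerivAt_gain τ ht.le).const_sub 1).const_mul (-x ^ 2 / 2)).exp).const_mul (2 * τ)
  refine hderiv.congr_deriv ?_
  have hsqrt : Real.sqrt (gain τ t) = Real.sqrt t * τ / Real.sqrt (1 + t * τ ^ 2) := by
    rw [gain, Real.sqrt_div (by positivity), Real.sqrt_mul ht.le, Real.sqrt_sq hτ.le]
  have hexp : -x ^ 2 / 2 * (1 - gain τ t) = -x ^ 2 / (2 * (1 + t * τ ^ 2)) := by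
    rw [one_sub_gain τ ht.le]; field_simp
  have hpow {y : ℝ} (hy : 0 < y) : y ^ (-(1:ℝ) / 2) = (Real.sqrt y)⁻¹ := by
    rw [neg_div, Real.rpow_neg hy.le, Real.sqrt_eq_rpow]
  have hone : 0 < 1 + t * τ ^ 2 := by positivity
  rw [hsqrt, hexp, hpow hone, Real.rpow_sub_one ht.ne', hpow ht, gain]
  generalize Real.exp (-x ^ 2 / (2 * (1 + t * τ ^ 2))) = E
  have hA : 0 < Real.sqrt t := by positivity
  have hB : 0 < Real.sqrt (1 + t * τ ^ 2) := by positivity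
  have hA2 : t = Real.sqrt t ^ 2 := (Real.sq_sqrt ht.le).symm
  have hB2 : 1 + t * τ ^ 2 = Real.sqrt (1 + t * τ ^ 2) ^ 2 := (Real.sq_sqrt hone.le).symm
  set A := Real.sqrt t
  set B := Real.sqrt (1 + t * τ ^ 2)
  rw [hB2, hA2]
  field_simp

theorem continuousWithinAt_gainPrimitive_zero (x τ : ℝ) :
    ContinuousWithinAt (gainPrimitive x τ) (Ici 0) 0 := by
  have hgain := (hasDerivAt_gain τ le_rfl).continuousAt
  exact (continuousAt_const.mul (hgain.sqrt.mul
    (continuousAt_const.mul (continuousAt_const.sub hgain)).rexp)).continuousWithinAt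

theorem tendsto_gainPrimitive_atTop (x : ℝ) (hτ : 0 < τ) :
    Tendsto (gainPrimitive x τ) atTop (nhds (2 * τ)) := by
  have hgain := tendsto_gain_atTop hτ
  have h : Tendsto (gainPrimitive x τ) atTop
      (nhds (2 * τ * (Real.sqrt 1 * Real.exp (-x ^ 2 / 2 * (1 - 1))))) :=
    (hgain.sqrt.mul ((hgain.const_sub 1).const_mul (-x ^ 2 / 2)).rexp).const_mul (2 * τ)
  simpa using h

end Gain

section Numerators

variable {P : Prior} {τ : ℝ}

theorem wt_eq_of_a_eq_half (ha : P.a = 1 / 2) (x τ t : ℝ) :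
    wt P x τ t = (1 + t * τ ^ 2) ^ (-(1:ℝ) / 2) * t ^ (-(1:ℝ) / 2 - 1) *
      Real.exp (-x ^ 2 / (2 * (1 + t * τ ^ 2))) * P.L t := by
  rw [wt, ha, neg_div]; ring

theorem integral_gain_add_sq_mul_wt_le (ha : P.a = 1 / 2) (hτ : 0 < τ) (x : ℝ) :
    ∫ t in Ioi 0, (gain τ t + x ^ 2 * gain τ t ^ 2) * wt P x τ t ≤ 2 * P.M * τ := by
  have hcont := continuousWithinAt_gainPrimitive_zero x τ
  have hderiv := fun t (ht : t ∈ Ioi (0:ℝ)) => hasDerivAt_gainPrimitive x hτ ht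
  have hlim := tendsto_gainPrimitive_atTop x hτ
  have hnonneg (t : ℝ) (ht : t ∈ Ioi (0:ℝ)) :
      0 ≤ (gain τ t + x ^ 2 * gain τ t ^ 2) * ((1 + t * τ ^ 2) ^ (-(1:ℝ) / 2) *
        t ^ (-(1:ℝ) / 2 - 1) * Real.exp (-x ^ 2 / (2 * (1 + t * τ ^ 2)))) := by
    have ht : 0 < t := ht
    have := gain_nonneg τ ht.le
    positivity
  have hint := integrableOn_Ioi_deriv_of_nonneg hcont hderiv hnonneg hlim
  have hzero : gainPrimitive x τ 0 = 0 := by simp [gainPrimitive, gain]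
  calc ∫ t in Ioi 0, (gain τ t + x ^ 2 * gain τ t ^ 2) * wt P x τ t
      ≤ ∫ t in Ioi 0, (gain τ t + x ^ 2 * gain τ t ^ 2) * ((1 + t * τ ^ 2) ^ (-(1:ℝ) / 2) *
          t ^ (-(1:ℝ) / 2 - 1) * Real.exp (-x ^ 2 / (2 * (1 + t * τ ^ 2)))) * P.M := by
        refine integral_mono_of_nonneg ?_ (hint.mul_const P.M) ?_ <;>
          filter_upwards [ae_restrict_mem measurableSet_Ioi] with t ht
        · have := gain_nonneg τ (le_of_lt ht)
          exact mul_nonneg (by positivity) (wt_pos P x τ ht).le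
        · rw [wt_eq_of_a_eq_half ha, ← mul_assoc]
          exact mul_le_mul_of_nonneg_left (P.L_le t ht) (hnonneg t ht)
    _ = 2 * P.M * τ := by
        rw [integral_mul_const, integral_Ioi_of_hasDerivAt_of_nonneg hcont hderiv hnonneg hlim,
          hzero]
        ring

theorem rpow_mul_rpow_le_inv {t : ℝ} (hτ : 0 < τ) (ht : 0 < t) :
    (1 + t * τ ^ 2) ^ (-(1:ℝ) / 2) * t ^ (-(1:ℝ) / 2 - 1) ≤ (t ^ 2 * τ)⁻¹ := by
  have hsqrt : Real.sqrt t * τ ≤ Real.sqrt (1 + t * τ ^ 2) := by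
    apply Real.le_sqrt_of_sq_le
    rw [mul_pow, Real.sq_sqrt ht.le]
    linarith
  calc (1 + t * τ ^ 2) ^ (-(1:ℝ) / 2) * t ^ (-(1:ℝ) / 2 - 1)
      = (Real.sqrt (1 + t * τ ^ 2))⁻¹ * ((Real.sqrt t)⁻¹ / t) := by
        rw [Real.rpow_sub_one ht.ne', neg_div, Real.rpow_neg (by positivity),
          Real.rpow_neg ht.le, Real.sqrt_eq_rpow, Real.sqrt_eq_rpow]
    _ ≤ (Real.sqrt t * τ)⁻¹ * ((Real.sqrt t)⁻¹ / t) := by gcongr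
    _ = (t ^ 2 * τ)⁻¹ := by
        rw [pow_two]
        field_simp
        rw [Real.sq_sqrt ht.le]

/-- The two terms dominate `κ² · wt` for `tτ²x² ≤ 1` and for `tτ²x² > 1`, respectively. -/
theorem one_sub_gain_sq_mul_wt_le (ha : P.a = 1 / 2) (hτ : 0 < τ) {x t : ℝ} (hx : 1 ≤ x ^ 2)
    (ht : 0 < t) :
    (1 - gain τ t) ^ 2 * wt P x τ t ≤
      Real.exp (1 / 2) * Real.exp (-x ^ 2 / 2) * P.mixingDensity t +
        6144 * P.M * τ / x ^ 4 * (τ ^ 2 / (1 + t * τ ^ 2) ^ 2) := by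
  have hM := P.M_pos
  have hdens := P.mixingDensity_nonneg ht
  have hx0 : x ≠ 0 := by rintro rfl; norm_num at hx
  have hs : 0 < t * τ ^ 2 := by positivity
  rcases le_or_gt (t * τ ^ 2 * x ^ 2) 1 with hsx | hsx
  · have hκ : (1 - gain τ t) ^ 2 ≤ 1 :=
      pow_le_one₀ (sub_nonneg.2 (gain_le_one τ ht.le)) (by linarith [gain_nonneg τ ht.le])
    have hexp : Real.exp (-x ^ 2 / (2 * (1 + t * τ ^ 2))) ≤
        Real.exp (1 / 2) * Real.exp (-x ^ 2 / 2) := by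
      rw [← Real.exp_add, Real.exp_le_exp, div_le_iff₀ (by positivity)]
      nlinarith
    calc (1 - gain τ t) ^ 2 * wt P x τ t ≤ wt P x τ t :=
          mul_le_of_le_one_left (wt_pos P x τ ht).le hκ
      _ ≤ Real.exp (-x ^ 2 / (2 * (1 + t * τ ^ 2))) * P.mixingDensity t :=
          wt_le_exp_mul_mixingDensity P x τ ht
      _ ≤ Real.exp (1 / 2) * Real.exp (-x ^ 2 / 2) * P.mixingDensity t := by gcongr
      _ ≤ _ := le_add_of_nonneg_right (by positivity)
  · have hexp : Real.exp (-x ^ 2 / (2 * (1 + t * τ ^ 2))) ≤ 6144 * (t * τ ^ 2) ^ 2 / x ^ 4 := by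
      rw [le_div_iff₀ (by positivity)]
      linarith [sq_mul_exp_neg_div_le hx hsx]
    calc (1 - gain τ t) ^ 2 * wt P x τ t
        ≤ (1 - gain τ t) ^ 2 * ((t ^ 2 * τ)⁻¹ * (6144 * (t * τ ^ 2) ^ 2 / x ^ 4) * P.M) := by
          rw [wt_eq_of_a_eq_half ha]
          have := P.L_pos t ht
          have := P.L_le t ht
          have := rpow_mul_rpow_le_inv hτ ht
          gcongr
      _ = 6144 * P.M * τ / x ^ 4 * (τ ^ 2 / (1 + t * τ ^ 2) ^ 2) := by
          rw [one_sub_gain τ ht.le]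
          field_simp
      _ ≤ _ := le_add_of_nonneg_left (by positivity)

theorem integral_one_sub_gain_sq_mul_wt_le (ha : P.a = 1 / 2) (hP : P.Proper) (hτ : 0 < τ) {x : ℝ}
    (hx : 1 ≤ x ^ 2) :
    ∫ t in Ioi 0, (1 - gain τ t) ^ 2 * wt P x τ t ≤
      Real.exp (1 / 2) * (∫ t in Ioi 0, P.mixingDensity t) * Real.exp (-x ^ 2 / 2) +
        6144 * P.M * τ / x ^ 4 := by
  have hdens := hP.const_mul (Real.exp (1 / 2) * Real.exp (-x ^ 2 / 2))
  have hκ := (integrableOn_deriv_gain hτ).const_mul (6144 * P.M * τ / x ^ 4)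
  calc _ ≤ ∫ t in Ioi 0, (Real.exp (1 / 2) * Real.exp (-x ^ 2 / 2) * P.mixingDensity t +
          6144 * P.M * τ / x ^ 4 * (τ ^ 2 / (1 + t * τ ^ 2) ^ 2)) := by
        refine integral_mono_of_nonneg ?_ (hdens.add hκ) ?_ <;>
          filter_upwards [ae_restrict_mem measurableSet_Ioi] with t ht
        · exact mul_nonneg (sq_nonneg _) (wt_pos P x τ ht).le
        · exact one_sub_gain_sq_mul_wt_le ha hτ hx ht
    _ = _ := by
        rw [integral_add hdens hκ, integral_const_mul, integral_const_mul, integral_deriv_gain hτ]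
        ring

end Numerators

section LowerBounds

variable {P : Prior} {τ : ℝ}

theorem exp_neg_sq_mul_integral_wt_zero_le (hP : P.Proper) {σ : ℝ} (hσ : τ ^ 2 ≤ σ ^ 2) (x : ℝ) :
    Real.exp (-x ^ 2 / 2) * ∫ t in Ioi 0, wt P 0 σ t ≤ ∫ t in Ioi 0, wt P x τ t := by
  rw [← integral_const_mul]
  exact setIntegral_mono_on (((integrableOn_wt_iff P 0 σ).2 hP).const_mul _)
    ((integrableOn_wt_iff P x τ).2 hP) measurableSet_Ioi
    fun t ht => exp_neg_sq_mul_wt_zero_le P ht hσ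

theorem le_wt_of_mem_Ioc (hτ : 0 < τ) {x t : ℝ} (hx : 1 ≤ x ^ 2) (hτx : P.t₀ * τ ^ 2 ≤ x ^ 2)
    (ht : t ∈ Ioc (x ^ 2 / τ ^ 2) (2 * (x ^ 2 / τ ^ 2))) :
    (3 * x ^ 2) ^ (-(1:ℝ) / 2) * (2 * (x ^ 2 / τ ^ 2)) ^ (-P.a - 1) * P.c₀ * Real.exp (-1 / 2) ≤
      wt P x τ t := by
  have ht0 : 0 < t := lt_of_le_of_lt (by positivity) ht.1
  have hs₁ : x ^ 2 < t * τ ^ 2 := (div_lt_iff₀ (by positivity)).1 ht.1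
  have hs₂ : t * τ ^ 2 ≤ 2 * x ^ 2 := by
    have := ht.2
    rwa [← mul_div_assoc, le_div_iff₀ (by positivity)] at this
  have hL : P.c₀ ≤ P.L t :=
    P.L_ge t (le_of_mul_le_mul_right (hτx.trans hs₁.le) (by positivity))
  have hone : (3 * x ^ 2) ^ (-(1:ℝ) / 2) ≤ (1 + t * τ ^ 2) ^ (-(1:ℝ) / 2) :=
    Real.rpow_le_rpow_of_nonpos (by positivity) (by linarith) (by norm_num)
  have hpow : (2 * (x ^ 2 / τ ^ 2)) ^ (-P.a - 1) ≤ t ^ (-P.a - 1) :=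
    Real.rpow_le_rpow_of_nonpos ht0 ht.2 (by linarith [P.a_pos])
  have hexp : (-1:ℝ) / 2 ≤ -x ^ 2 / (2 * (1 + t * τ ^ 2)) := by
    rw [neg_div, neg_div, neg_le_neg_iff, div_le_div_iff₀ (by positivity) (by norm_num)]
    linarith
  have := P.c₀_pos
  have := P.L_pos t ht0
  unfold wt
  gcongr

theorem le_integral_wt_of_one_le_sq (hP : P.Proper) (hτ : 0 < τ) {x : ℝ} (hx : 1 ≤ x ^ 2)
    (hτx : P.t₀ * τ ^ 2 ≤ x ^ 2) :
    (3 * x ^ 2) ^ (-(1:ℝ) / 2) * (2 * (x ^ 2 / τ ^ 2)) ^ (-P.a - 1) * P.c₀ * Real.exp (-1 / 2) *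
      (x ^ 2 / τ ^ 2) ≤ ∫ t in Ioi 0, wt P x τ t := by
  set y := x ^ 2 / τ ^ 2
  have hy0 : 0 ≤ y := by positivity
  have hint := (integrableOn_wt_iff P x τ).2 hP
  have hsub : Ioc y (2 * y) ⊆ Ioi 0 := fun t ht => hy0.trans_lt ht.1
  calc _ ≤ ∫ t in Ioc y (2 * y), wt P x τ t := by
        have h := setIntegral_ge_of_const_le_real measurableSet_Ioc measure_Ioc_lt_top.ne
          (fun t ht => le_wt_of_mem_Ioc hτ hx hτx ht) (hint.mono_set hsub)
        rwa [Real.volume_real_Ioc_of_le (by linarith), two_mul, add_sub_cancel_right,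
          ← two_mul] at h
    _ ≤ ∫ t in Ioi 0, wt P x τ t :=
        setIntegral_mono_set hint (ae_restrict_wt_nonneg P x τ) hsub.eventuallyLE

theorem exists_mul_div_sq_le_integral_wt (ha : P.a = 1 / 2) (hP : P.Proper) :
    ∃ d > 0, ∀ τ > 0, ∀ x : ℝ, 1 ≤ x ^ 2 → P.t₀ * τ ^ 2 ≤ x ^ 2 →
      d * (τ / x ^ 2) ≤ ∫ t in Ioi 0, wt P x τ t := by
  have hc₀ := P.c₀_pos
  refine ⟨P.c₀ * Real.exp (-1 / 2) * (3 ^ (-(1:ℝ) / 2) * 2 ^ (-(3:ℝ) / 2)), by positivity,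
    fun τ hτ x hx hτx => ?_⟩
  refine le_of_eq_of_le ?_ (le_integral_wt_of_one_le_sq hP hτ hx hτx)
  have hx0 : x ≠ 0 := by rintro rfl; norm_num at hx
  have hpow : (2 * (x ^ 2 / τ ^ 2)) ^ (-(3:ℝ) / 2) = 2 ^ (-(3:ℝ) / 2) * (|x| / τ) ^ (-3:ℝ) := by
    rw [Real.mul_rpow (by positivity) (by positivity), ← sq_abs x, ← div_pow,
      ← Real.rpow_natCast_mul (by positivity)]
    norm_num
  have hone : (3 * x ^ 2) ^ (-(1:ℝ) / 2) = 3 ^ (-(1:ℝ) / 2) * |x| ^ (-1:ℝ) := by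
    rw [Real.mul_rpow (by positivity) (by positivity), ← sq_abs x,
      ← Real.rpow_natCast_mul (by positivity)]
    norm_num
  have : 0 < |x| := abs_pos.2 hx0
  rw [ha, show -(1 / 2:ℝ) - 1 = -3 / 2 by norm_num, hpow, hone, Real.rpow_neg_one,
    Real.rpow_neg (by positivity), ← sq_abs x]
  norm_num
  field_simp
  exact Even.pow_abs ⟨2, rfl⟩ x

end LowerBounds

section Spread

variable {P : Prior} {τ : ℝ}

theorem spread_le_exp (ha : P.a = 1 / 2) (hP : P.Proper) (hτ : 0 < τ) (hτ₁ : τ ≤ 1) (x : ℝ) :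
    spread P τ x ≤ 2 * P.M / (∫ t in Ioi 0, wt P 0 1 t) * (τ * Real.exp (x ^ 2 / 2)) := by
  have hZ := integral_wt_pos hP 0 1
  have hlower := exp_neg_sq_mul_integral_wt_zero_le hP
    (pow_le_pow_left₀ hτ.le hτ₁ 2) x
  have hM := P.M_pos
  calc spread P τ x
      ≤ (∫ t in Ioi 0, (gain τ t + x ^ 2 * gain τ t ^ 2) * wt P x τ t) /
          ∫ t in Ioi 0, wt P x τ t := by
        simpa only [sub_zero, integral_mixingPosterior hP] using
          spread_le_integral_gain_add hP hτ x 0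
    _ ≤ 2 * P.M * τ / (Real.exp (-x ^ 2 / 2) * ∫ t in Ioi 0, wt P 0 1 t) := by
        have := integral_gain_add_sq_mul_wt_le ha hτ x
        gcongr
    _ = 2 * P.M / (∫ t in Ioi 0, wt P 0 1 t) * (τ * Real.exp (x ^ 2 / 2)) := by
        rw [neg_div, Real.exp_neg]
        field_simp

theorem integrable_one_sub_gain_sq (hP : P.Proper) (τ x : ℝ) :
    Integrable (fun t => (1 - gain τ t) ^ 2) (mixingPosterior P τ x) := by
  simpa only [sub_sq_comm] using integrable_gain_sub_const_sq hP τ x 1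

theorem integral_mixingPosterior_le_one (hP : P.Proper) {x : ℝ} {g : ℝ → ℝ}
    (hg : Integrable g (mixingPosterior P τ x)) (h : ∀ t > 0, g t ≤ 1) :
    ∫ t, g t ∂mixingPosterior P τ x ≤ 1 := by
  have := isProbabilityMeasure_mixingPosterior hP τ x
  calc ∫ t, g t ∂mixingPosterior P τ x ≤ ∫ _, (1:ℝ) ∂mixingPosterior P τ x := by
        refine integral_mono_ae hg (integrable_const 1) ?_
        filter_upwards [ae_mixingPosterior_pos τ x] with t ht using h t ht
    _ = 1 := by simp

theorem spread_le_one_add (hP : P.Proper) (hτ : 0 < τ) (x : ℝ) :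
    spread P τ x ≤ 1 + x ^ 2 * ∫ t, (1 - gain τ t) ^ 2 ∂mixingPosterior P τ x := by
  have hg := integrable_gain hP τ x
  have h := spread_le_integral_gain_add hP hτ x 1
  simp only [sub_sq_comm _ (1:ℝ)] at h
  rw [integral_add hg ((integrable_one_sub_gain_sq hP τ x).const_mul _), integral_const_mul] at h
  exact h.trans (add_le_add_left
    (integral_mixingPosterior_le_one hP hg fun t ht => gain_le_one τ (le_of_lt ht)) _)

theorem exists_sq_mul_integral_one_sub_gain_sq_le (ha : P.a = 1 / 2) (hP : P.Proper) :
    ∃ C > 0, ∀ τ > 0, ∀ x : ℝ, 1 ≤ x ^ 2 → P.t₀ * τ ^ 2 ≤ x ^ 2 →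
      x ^ 2 * ∫ t, (1 - gain τ t) ^ 2 ∂mixingPosterior P τ x ≤
        C * (1 + x ^ 4 * Real.exp (-x ^ 2 / 2) / τ) := by
  obtain ⟨d, hd, hlower⟩ := exists_mul_div_sq_le_integral_wt ha hP
  set b := Real.exp (1 / 2) * ∫ t in Ioi 0, P.mixingDensity t
  have hb0 : 0 ≤ b := mul_nonneg (Real.exp_pos _).le
    (setIntegral_nonneg measurableSet_Ioi fun t ht => P.mixingDensity_nonneg ht)
  have hM := P.M_pos
  refine ⟨(b + 6144 * P.M) / d, by positivity, fun τ hτ x hx hτx => ?_⟩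
  have hx0 : x ≠ 0 := by rintro rfl; norm_num at hx
  have hnum := integral_one_sub_gain_sq_mul_wt_le ha hP hτ hx
  have hden := hlower τ hτ x hx hτx
  calc x ^ 2 * ∫ t, (1 - gain τ t) ^ 2 ∂mixingPosterior P τ x
      ≤ x ^ 2 * ((b * Real.exp (-x ^ 2 / 2) + 6144 * P.M * τ / x ^ 4) / (d * (τ / x ^ 2))) := by
        rw [integral_mixingPosterior hP]
        gcongr
    _ = b / d * (x ^ 4 * Real.exp (-x ^ 2 / 2) / τ) + 6144 * P.M / d := by field_simp
    _ ≤ (b + 6144 * P.M) / d * (x ^ 4 * Real.exp (-x ^ 2 / 2) / τ) +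
          (b + 6144 * P.M) / d * 1 := by
        rw [mul_one]
        gcongr <;> linarith
    _ = (b + 6144 * P.M) / d * (1 + x ^ 4 * Real.exp (-x ^ 2 / 2) / τ) := by ring

/-- The order of the posterior variance for `a = 1 / 2`: the first term is the smaller one for
`|x|` below the threshold `√(2 log τ⁻¹)`, roughly, and the second one above it. -/
def varianceEnvelope (τ x : ℝ) : ℝ :=
  min (τ * Real.exp (x ^ 2 / 2)) (1 + x ^ 4 * Real.exp (-x ^ 2 / 2) / τ)

theorem exists_spread_le_mul_varianceEnvelope (ha : P.a = 1 / 2) (hP : P.Proper) :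
    ∃ C > 0, ∀ᶠ τ in nhdsWithin 0 (Ioi 0), ∀ x, spread P τ x ≤ C * varianceEnvelope τ x := by
  obtain ⟨C, hC, hlarge⟩ := exists_sq_mul_integral_one_sub_gain_sq_le ha hP
  have hsmall : Tendsto (fun τ => P.t₀ * τ ^ 2) (nhdsWithin 0 (Ioi 0)) (nhds 0) :=
    tendsto_nhdsWithin_of_tendsto_nhds (Continuous.tendsto' (by fun_prop) 0 0 (by simp))
  set D := 2 * P.M / ∫ t in Ioi 0, wt P 0 1 t
  have hD : 0 < D := div_pos (mul_pos two_pos P.M_pos) (integral_wt_pos hP 0 1)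
  refine ⟨D + (2 + C), by positivity, ?_⟩
  filter_upwards [Ioc_mem_nhdsGT one_pos, hsmall.eventually_le_const one_pos]
    with τ ⟨hτ, hτ₁⟩ hτ₂ x
  rw [varianceEnvelope, mul_min_of_nonneg _ _ (by positivity), le_min_iff]
  constructor
  · refine (spread_le_exp ha hP hτ hτ₁ x).trans ?_
    gcongr
    linarith
  · set e := x ^ 4 * Real.exp (-x ^ 2 / 2) / τ
    have he : 0 ≤ e := by positivity
    refine (spread_le_one_add hP hτ x).trans ?_
    rcases le_total 1 (x ^ 2) with hx | hx
    · have := hlarge τ hτ x hx (hτ₂.trans hx)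
      nlinarith
    · have := integral_mixingPosterior_le_one hP (integrable_one_sub_gain_sq hP τ x) fun t ht =>
        pow_le_one₀ (n := 2) (sub_nonneg.2 (gain_le_one τ (le_of_lt ht)))
          (sub_le_self 1 (gain_nonneg τ (le_of_lt ht)))
      nlinarith [mul_le_mul hx this (by positivity) zero_le_one]

end Spread

section Laplace

theorem integral_exp_neg_mul_abs_sub {c : ℝ} (hc : 0 < c) (b : ℝ) :
    ∫ x, Real.exp (-(c * |x - b|)) = 2 / c := by
  rw [integral_sub_right_eq_self (fun x => Real.exp (-(c * |x|))) b,
    integral_comp_abs (f := fun x => Real.exp (-(c * x)))]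
  simp only [← neg_mul]
  rw [integral_exp_mul_Ioi (neg_lt_zero.2 hc)]
  simp [div_eq_mul_inv]

theorem integrable_exp_neg_mul_abs_sub {c : ℝ} (hc : 0 < c) (b : ℝ) :
    Integrable fun x => Real.exp (-(c * |x - b|)) :=
  .of_integral_ne_zero (by rw [integral_exp_neg_mul_abs_sub hc]; positivity)

theorem exp_neg_mul_abs_abs_sub_le (b c x : ℝ) :
    Real.exp (-(c * |(|x| - b)|)) ≤
      Real.exp (-(c * |x - b|)) + Real.exp (-(c * |x - -b|)) := by
  rcases abs_cases x with ⟨h, -⟩ | ⟨h, -⟩ <;> rw [h]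
  · exact le_add_of_nonneg_right (Real.exp_pos _).le
  · rw [← abs_neg (-x - b), show -(-x - b) = x - -b by ring]
    exact le_add_of_nonneg_left (Real.exp_pos _).le

theorem gaussianReal_le_volume (m : ℝ) : gaussianReal m 1 ≤ volume := by
  rw [gaussianReal_of_var_ne_zero m one_ne_zero]
  nth_rw 2 [← withDensity_one (μ := volume)]
  refine withDensity_mono (.of_forall fun x => ?_)
  rw [gaussianPDF, Pi.one_apply, ENNReal.ofReal_le_one, gaussianPDFReal]
  refine mul_le_one₀ (inv_le_one_of_one_le₀ (Real.one_le_sqrt.2 ?_)) (Real.exp_pos _).le ?_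
  · norm_num
    linarith [Real.pi_gt_three]
  · rw [Real.exp_le_one_iff, neg_div, neg_nonpos]
    positivity

/-- The Gaussian density is at most one, so the bound is uniform in the centre `m`. -/
theorem integral_exp_neg_mul_abs_abs_sub_gaussianReal_le (b m : ℝ) {c : ℝ} (hc : 0 < c) :
    ∫ x, Real.exp (-(c * |(|x| - b)|)) ∂gaussianReal m 1 ≤ 4 / c := by
  have hint := (integrable_exp_neg_mul_abs_sub hc b).add (integrable_exp_neg_mul_abs_sub hc (-b))
  calc ∫ x, Real.exp (-(c * |(|x| - b)|)) ∂gaussianReal m 1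
      ≤ ∫ x, (Real.exp (-(c * |x - b|)) + Real.exp (-(c * |x - -b|))) ∂gaussianReal m 1 :=
        integral_mono_of_nonneg (.of_forall fun _ => (Real.exp_pos _).le)
          (hint.mono_measure (gaussianReal_le_volume m))
          (.of_forall (exp_neg_mul_abs_abs_sub_le b c))
    _ ≤ ∫ x, (Real.exp (-(c * |x - b|)) + Real.exp (-(c * |x - -b|))) :=
        integral_mono_measure (gaussianReal_le_volume m)
          (.of_forall fun _ => add_nonneg (Real.exp_pos _).le (Real.exp_pos _).le) hint
    _ = 4 / c := by
        rw [integral_add (integrable_exp_neg_mul_abs_sub hc b)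
          (integrable_exp_neg_mul_abs_sub hc (-b)), integral_exp_neg_mul_abs_sub hc,
          integral_exp_neg_mul_abs_sub hc]
        ring

theorem integral_gaussianReal_zero_one (f : ℝ → ℝ) :
    ∫ x, f x ∂gaussianReal 0 1 =
      (Real.sqrt (2 * Real.pi))⁻¹ * ∫ x, f x * Real.exp (-x ^ 2 / 2) := by
  rw [integral_gaussianReal_eq_integral_smul one_ne_zero, ← integral_const_mul]
  refine integral_congr_ae (.of_forall fun x => ?_)
  simp only [gaussianPDFReal, sub_zero, NNReal.coe_one, mul_one, smul_eq_mul]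
  ring

end Laplace

section Envelope

/-- The size of `|x|` at which the two terms of the envelope exchange roles. It is chosen so that
`exp (crossover τ ^ 2 / 2) = log τ⁻¹ / τ`, which makes both terms of order `log τ⁻¹` there. -/
def crossover (τ : ℝ) : ℝ := Real.sqrt (2 * Real.log τ⁻¹ + 2 * Real.log (Real.log τ⁻¹))

variable {τ : ℝ}

theorem crossover_sq (hℓ : 1 ≤ Real.log τ⁻¹) :
    crossover τ ^ 2 = 2 * Real.log τ⁻¹ + 2 * Real.log (Real.log τ⁻¹) :=
  Real.sq_sqrt (add_nonneg (by linarith) (mul_nonneg zero_le_two (Real.log_nonneg hℓ)))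

theorem two_mul_log_le_crossover_sq (hℓ : 1 ≤ Real.log τ⁻¹) :
    2 * Real.log τ⁻¹ ≤ crossover τ ^ 2 := by
  rw [crossover_sq hℓ]
  linarith [Real.log_nonneg hℓ]

theorem crossover_sq_le (hℓ : 1 ≤ Real.log τ⁻¹) : crossover τ ^ 2 ≤ 4 * Real.log τ⁻¹ := by
  rw [crossover_sq hℓ]
  linarith [Real.log_le_self (zero_le_one.trans hℓ)]

theorem crossover_pos (hℓ : 1 ≤ Real.log τ⁻¹) : 0 < crossover τ := by
  refine (Real.sqrt_nonneg _).lt_of_ne' fun h => ?_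
  nlinarith [two_mul_log_le_crossover_sq hℓ, show crossover τ = 0 from h]

theorem exp_sq_div_two_eq (hτ : 0 < τ) (hℓ : 1 ≤ Real.log τ⁻¹) (x : ℝ) :
    Real.exp (x ^ 2 / 2) =
      Real.log τ⁻¹ / τ * Real.exp ((x ^ 2 - crossover τ ^ 2) / 2) := by
  have hcross : Real.exp (crossover τ ^ 2 / 2) = Real.log τ⁻¹ / τ := by
    rw [crossover_sq hℓ, ← mul_add, mul_div_cancel_left₀ _ two_ne_zero, Real.exp_add,
      Real.exp_log (inv_pos.2 hτ), Real.exp_log (by linarith), div_eq_inv_mul]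
  rw [← hcross, ← Real.exp_add]
  ring_nf

theorem exp_neg_sq_div_two_eq (hτ : 0 < τ) (hℓ : 1 ≤ Real.log τ⁻¹) (x : ℝ) :
    Real.exp (-x ^ 2 / 2) =
      τ / Real.log τ⁻¹ * Real.exp (-(crossover τ ^ 2 / 2 * (x ^ 2 / crossover τ ^ 2 - 1))) := by
  have hB := crossover_pos hℓ
  rw [neg_div, Real.exp_neg, exp_sq_div_two_eq hτ hℓ, mul_inv, inv_div, ← Real.exp_neg]
  congr 3
  field_simp

theorem pow_four_mul_exp_div_le (hτ : 0 < τ) (hℓ : 1 ≤ Real.log τ⁻¹) (x : ℝ) :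
    x ^ 4 * Real.exp (-x ^ 2 / 2) / τ ≤
      16 * Real.log τ⁻¹ *
        Real.exp (-((crossover τ ^ 2 / 2 - 2) * (x ^ 2 / crossover τ ^ 2 - 1))) := by
  have hB := crossover_pos hℓ
  have : 0 < Real.log τ⁻¹ := by linarith
  have hBℓ : crossover τ ^ 4 ≤ 16 * Real.log τ⁻¹ ^ 2 := by
    nlinarith [crossover_sq_le hℓ, two_mul_log_le_crossover_sq hℓ]
  have hgauss := exp_neg_sq_div_two_eq hτ hℓ x
  set B := crossover τ
  set v := x ^ 2 / B ^ 2 with hv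
  have : 0 ≤ v := by positivity
  have hvexp : v ^ 2 ≤ Real.exp (2 * (v - 1)) := by
    calc v ^ 2 ≤ Real.exp (v - 1) ^ 2 := by
          gcongr
          linarith [Real.add_one_le_exp (v - 1)]
      _ = Real.exp (2 * (v - 1)) := by rw [← Real.exp_nat_mul]; norm_num
  calc x ^ 4 * Real.exp (-x ^ 2 / 2) / τ
      = B ^ 4 * v ^ 2 * Real.exp (-(B ^ 2 / 2 * (v - 1))) / Real.log τ⁻¹ := by
        rw [hgauss, hv]
        field_simp
    _ ≤ 16 * Real.log τ⁻¹ ^ 2 * Real.exp (2 * (v - 1)) * Real.exp (-(B ^ 2 / 2 * (v - 1))) /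
          Real.log τ⁻¹ := by gcongr
    _ = 16 * Real.log τ⁻¹ * Real.exp (-((B ^ 2 / 2 - 2) * (v - 1))) := by
        rw [mul_assoc, ← Real.exp_add]
        field_simp
        ring_nf

theorem varianceEnvelope_nonneg (hτ : 0 < τ) (x : ℝ) : 0 ≤ varianceEnvelope τ x :=
  le_min (by positivity) (by positivity)

theorem varianceEnvelope_le_log_mul_exp (hτ : 0 < τ) (hℓ : 4 ≤ Real.log τ⁻¹) (x : ℝ) :
    varianceEnvelope τ x ≤
      1 + 16 * Real.log τ⁻¹ * Real.exp (-(crossover τ / 2 * |(|x| - crossover τ)|)) := by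
  have hℓ₁ : 1 ≤ Real.log τ⁻¹ := by linarith
  have hB := crossover_pos hℓ₁
  have hB8 := two_mul_log_le_crossover_sq hℓ₁
  have htail := pow_four_mul_exp_div_le hτ hℓ₁ x
  have hexp := exp_sq_div_two_eq hτ hℓ₁ x
  set B := crossover τ
  set ℓ := Real.log τ⁻¹
  rcases le_total |x| B with hxB | hxB
  · calc varianceEnvelope τ x ≤ ℓ * Real.exp ((x ^ 2 - B ^ 2) / 2) := by
          refine (min_le_left _ _).trans_eq ?_
          rw [hexp]
          field_simp
      _ ≤ ℓ * Real.exp (-(B / 2 * |(|x| - B)|)) := by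
          rw [abs_of_nonpos (sub_nonpos.2 hxB), ← sq_abs x]
          gcongr
          nlinarith [mul_nonneg (abs_nonneg x) (sub_nonneg.2 hxB)]
      _ ≤ 1 + 16 * ℓ * Real.exp (-(B / 2 * |(|x| - B)|)) := by
          nlinarith [Real.exp_pos (-(B / 2 * |(|x| - B)|))]
  · refine (min_le_right _ _).trans (add_le_add_right (htail.trans ?_) 1)
    refine mul_le_mul_of_nonneg_left (Real.exp_le_exp.2 (neg_le_neg ?_)) (by positivity)
    rw [abs_of_nonneg (sub_nonneg.2 hxB), ← sq_abs x]
    have hlin : 2 / B * (|x| - B) ≤ |x| ^ 2 / B ^ 2 - 1 := by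
      rw [div_mul_eq_mul_div, div_sub_one (by positivity), div_le_div_iff₀ hB (by positivity)]
      nlinarith [mul_nonneg hB.le (sq_nonneg (|x| - B))]
    calc B / 2 * (|x| - B) ≤ (B ^ 2 / 2 - 2) * (2 / B) * (|x| - B) := by
          refine mul_le_mul_of_nonneg_right ?_ (sub_nonneg.2 hxB)
          rw [← mul_div_assoc, le_div_iff₀ hB]
          nlinarith
      _ ≤ (B ^ 2 / 2 - 2) * (|x| ^ 2 / B ^ 2 - 1) := by
          rw [mul_assoc]
          exact mul_le_mul_of_nonneg_left hlin (by nlinarith)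

theorem varianceEnvelope_mul_exp_le (hτ : 0 < τ) (hℓ : 4 ≤ Real.log τ⁻¹) (x : ℝ) :
    varianceEnvelope τ x * Real.exp (-x ^ 2 / 2) ≤
      17 * τ * Real.exp (1 - (crossover τ ^ 2)⁻¹ * x ^ 2) := by
  have hℓ₁ : 1 ≤ Real.log τ⁻¹ := by linarith
  have hB := crossover_pos hℓ₁
  have hB8 := two_mul_log_le_crossover_sq hℓ₁
  have htail := pow_four_mul_exp_div_le hτ hℓ₁ x
  have hexp := exp_neg_sq_div_two_eq hτ hℓ₁ x
  rw [inv_mul_eq_div]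
  set B := crossover τ
  set ℓ := Real.log τ⁻¹
  set v := x ^ 2 / B ^ 2
  rcases le_total v 1 with hv | hv
  · have hone : 1 ≤ Real.exp (1 - v) := Real.one_le_exp (sub_nonneg.2 hv)
    calc varianceEnvelope τ x * Real.exp (-x ^ 2 / 2)
        ≤ τ * Real.exp (x ^ 2 / 2) * Real.exp (-x ^ 2 / 2) := by gcongr; exact min_le_left _ _
      _ = τ := by rw [neg_div, mul_assoc, ← Real.exp_add, add_neg_cancel, Real.exp_zero, mul_one]
      _ ≤ 17 * τ * Real.exp (1 - v) := by nlinarith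
  · have hgauss : Real.exp (-x ^ 2 / 2) ≤ τ / ℓ * Real.exp (1 - v) := by
      rw [hexp]
      gcongr
      nlinarith
    have hpoly : x ^ 4 * Real.exp (-x ^ 2 / 2) / τ ≤ 16 * ℓ := by
      refine htail.trans (mul_le_of_le_one_right (by positivity) (Real.exp_le_one_iff.2 ?_))
      nlinarith
    calc varianceEnvelope τ x * Real.exp (-x ^ 2 / 2)
        ≤ (1 + 16 * ℓ) * (τ / ℓ * Real.exp (1 - v)) :=
          mul_le_mul ((min_le_right _ _).trans (by linarith)) hgauss (Real.exp_pos _).le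
            (by positivity)
      _ ≤ (ℓ + 16 * ℓ) * (τ / ℓ * Real.exp (1 - v)) := by gcongr
      _ = 17 * τ * Real.exp (1 - v) := by field_simp; ring

theorem integrable_varianceEnvelope (hτ : 0 < τ) (hℓ : 4 ≤ Real.log τ⁻¹) (μ : Measure ℝ)
    [IsFiniteMeasure μ] : Integrable (varianceEnvelope τ) μ := by
  have hℓ₁ : 1 ≤ Real.log τ⁻¹ := by linarith
  have hB := crossover_pos hℓ₁
  refine .of_bound (by unfold varianceEnvelope; fun_prop) (1 + 16 * Real.log τ⁻¹)
    (.of_forall fun x => ?_)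
  rw [Real.norm_of_nonneg (varianceEnvelope_nonneg hτ x)]
  refine (varianceEnvelope_le_log_mul_exp hτ hℓ x).trans (add_le_add_right
    (mul_le_of_le_one_right (by positivity) (Real.exp_le_one_iff.2 ?_)) 1)
  rw [neg_nonpos]
  positivity

theorem integral_varianceEnvelope_gaussianReal_le (hτ : 0 < τ) (hℓ : 4 ≤ Real.log τ⁻¹) (m : ℝ) :
    ∫ x, varianceEnvelope τ x ∂gaussianReal m 1 ≤ 129 * Real.sqrt (Real.log τ⁻¹) := by
  have hℓ₁ : 1 ≤ Real.log τ⁻¹ := by linarith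
  have hB := crossover_pos hℓ₁
  have hsqrt : Real.sqrt (Real.log τ⁻¹) ≤ crossover τ :=
    Real.sqrt_le_iff.2 ⟨hB.le, by
      linarith [two_mul_log_le_crossover_sq hℓ₁]⟩
  have hone : 1 ≤ Real.sqrt (Real.log τ⁻¹) := Real.one_le_sqrt.2 (by linarith)
  have hsq : Real.sqrt (Real.log τ⁻¹) ^ 2 = Real.log τ⁻¹ := Real.sq_sqrt (by linarith)
  have hbump := integral_exp_neg_mul_abs_abs_sub_gaussianReal_le (crossover τ) m (half_pos hB)
  set ℓ := Real.log τ⁻¹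
  set B := crossover τ
  have hint : Integrable (fun x => Real.exp (-(B / 2 * |(|x| - B)|))) (gaussianReal m 1) := by
    refine .of_bound (by fun_prop) 1 (.of_forall fun x => ?_)
    rw [Real.norm_of_nonneg (Real.exp_pos _).le, Real.exp_le_one_iff, neg_nonpos]
    positivity
  calc ∫ x, varianceEnvelope τ x ∂gaussianReal m 1
      ≤ ∫ x, (1 + 16 * ℓ * Real.exp (-(B / 2 * |(|x| - B)|))) ∂gaussianReal m 1 :=
        integral_mono (integrable_varianceEnvelope hτ hℓ _)
          ((integrable_const 1).add (hint.const_mul _)) (varianceEnvelope_le_log_mul_exp hτ hℓ)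
    _ ≤ 1 + 16 * ℓ * (4 / (B / 2)) := by
        rw [integral_add (integrable_const 1) (hint.const_mul _), integral_const_mul]
        gcongr
        simp
    _ = 1 + 128 * (Real.sqrt ℓ ^ 2 / B) := by rw [hsq]; field_simp; ring
    _ ≤ 1 + 128 * Real.sqrt ℓ := by
        gcongr
        rw [div_le_iff₀ hB, sq]
        gcongr
    _ ≤ 129 * Real.sqrt ℓ := by linarith

theorem integral_varianceEnvelope_gaussianReal_zero_le (hτ : 0 < τ) (hℓ : 4 ≤ Real.log τ⁻¹) :
    ∫ x, varianceEnvelope τ x ∂gaussianReal 0 1 ≤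
      34 * Real.exp 1 * τ * Real.sqrt (Real.log τ⁻¹) := by
  have hℓ₁ : 1 ≤ Real.log τ⁻¹ := by linarith
  have hB := crossover_pos hℓ₁
  have hBle : crossover τ ≤ 2 * Real.sqrt (Real.log τ⁻¹) := by
    refine abs_le_of_sq_le_sq' ?_ (by positivity) |>.2
    rw [mul_pow, Real.sq_sqrt (by linarith)]
    linarith [crossover_sq_le hℓ₁]
  calc ∫ x, varianceEnvelope τ x ∂gaussianReal 0 1
      ≤ (Real.sqrt (2 * Real.pi))⁻¹ *
          ∫ x, 17 * τ * Real.exp 1 * Real.exp (-(crossover τ ^ 2)⁻¹ * x ^ 2) := by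
        rw [integral_gaussianReal_zero_one]
        refine mul_le_mul_of_nonneg_left (integral_mono_of_nonneg (.of_forall fun x => ?_)
          ((integrable_exp_neg_mul_sq (by positivity)).const_mul _) (.of_forall fun x => ?_))
          (by positivity)
        · exact mul_nonneg (varianceEnvelope_nonneg hτ x) (Real.exp_pos _).le
        · refine (varianceEnvelope_mul_exp_le hτ hℓ x).trans_eq ?_
          simp only [sub_eq_add_neg, Real.exp_add, neg_mul, mul_assoc]
    _ = 17 * τ * Real.exp 1 * (crossover τ * (Real.sqrt 2)⁻¹) := by
        rw [integral_const_mul, integral_gaussian, div_inv_eq_mul, Real.sqrt_mul zero_le_two,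
          Real.sqrt_mul Real.pi_pos.le, Real.sqrt_sq hB.le]
        field_simp
    _ ≤ 17 * τ * Real.exp 1 * (2 * Real.sqrt (Real.log τ⁻¹) * 1) := by
        gcongr
        exact inv_le_one_of_one_le₀ (Real.one_le_sqrt.2 one_le_two)
    _ = 34 * Real.exp 1 * τ * Real.sqrt (Real.log τ⁻¹) := by ring

end Envelope

section Risk

variable {P : Prior} {τ : ℝ}

theorem integral_varianceEnvelope_gaussianReal_le_ite (hτ : 0 < τ) (hℓ : 4 ≤ Real.log τ⁻¹)
    (m : ℝ) :
    ∫ x, varianceEnvelope τ x ∂gaussianReal m 1 ≤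
      129 * Real.sqrt (Real.log τ⁻¹) * (τ + if m ≠ 0 then 1 else 0) := by
  by_cases hm : m = 0
  · calc ∫ x, varianceEnvelope τ x ∂gaussianReal m 1
        ≤ 34 * Real.exp 1 * τ * Real.sqrt (Real.log τ⁻¹) :=
          hm ▸ integral_varianceEnvelope_gaussianReal_zero_le hτ hℓ
      _ ≤ 34 * 3 * τ * Real.sqrt (Real.log τ⁻¹) := by gcongr; exact Real.exp_one_lt_three.le
      _ ≤ 129 * τ * Real.sqrt (Real.log τ⁻¹) := by gcongr; norm_num
      _ = 129 * Real.sqrt (Real.log τ⁻¹) * (τ + if m ≠ 0 then 1 else 0) := by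
          rw [if_neg (not_not.2 hm)]; ring
  · rw [if_pos hm]
    refine (integral_varianceEnvelope_gaussianReal_le hτ hℓ m).trans ?_
    exact le_mul_of_one_le_right (by positivity) (by linarith)

theorem postProb_lt_sum_sq_le (hP : P.Proper) (hτ : 0 < τ) {n : ℕ} (x : Fin n → ℝ) {r : ℝ}
    (hr : 0 < r) :
    postProb P τ x {θ | r < ∑ i, (θ i - T P τ (x i)) ^ 2} ≤ (∑ i, spread P τ (x i)) / r := by
  have := fun i => isProbabilityMeasure_posterior hP hτ (x i)
  rw [postProb_eq_pi_posterior hP hτ x (measurableSet_lt measurable_const (by fun_prop))]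
  exact measureReal_pi_lt_sum_le (f := fun i θ => (θ - T P τ (x i)) ^ 2)
    (fun i => integrable_sub_const_sq_posterior hP hτ (x i) _) (fun i θ => sq_nonneg _) hr

theorem EN_postProb_lt_sum_sq_le (hP : P.Proper) (hτ : 0 < τ) {n : ℕ} (θ₀ : Fin n → ℝ)
    {r : ℝ} (hr : 0 < r) {g : ℝ → ℝ} (hg : ∀ x, spread P τ x ≤ g x)
    (hint : ∀ i, Integrable g (gaussianReal (θ₀ i) 1)) :
    EN n θ₀ (fun x => postProb P τ x {θ | r < ∑ i, (θ i - T P τ (x i)) ^ 2}) ≤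
      (∑ i, ∫ x, g x ∂gaussianReal (θ₀ i) 1) / r := by
  rw [EN_eq_integral_pi, ← integral_sum_eval hint, ← integral_div]
  refine integral_mono_of_nonneg (.of_forall fun x => ?_) ((integrable_sum_eval hint).div_const r)
    (.of_forall fun x => ?_)
  · dsimp only [Pi.zero_apply]
    rw [postProb_eq_pi_posterior hP hτ x (measurableSet_lt measurable_const (by fun_prop))]
    exact measureReal_nonneg
  · refine (postProb_lt_sum_sq_le hP hτ x hr).trans ?_
    dsimp only
    gcongr
    exact hg _

theorem exists_EN_postProb_lt_sum_sq_le_of_proper (ha : P.a = 1 / 2) (hP : P.Proper) :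
    ∃ C > 0, ∀ᶠ τ in nhdsWithin 0 (Ioi 0), ∀ (n : ℕ) (θ₀ : Fin n → ℝ), ∀ r > 0,
      EN n θ₀ (fun x => postProb P τ x {θ | r < ∑ i, (θ i - T P τ (x i)) ^ 2}) ≤
        C * Real.sqrt (Real.log τ⁻¹) *
          (n * τ + (Finset.univ.filter fun i => θ₀ i ≠ 0).card) / r := by
  obtain ⟨C, hC, hspread⟩ := exists_spread_le_mul_varianceEnvelope ha hP
  refine ⟨C * 129, by positivity, ?_⟩
  filter_upwards [hspread, self_mem_nhdsWithin,
    (Real.tendsto_log_atTop.comp tendsto_inv_nhdsGT_zero).eventually_ge_atTop 4]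
    with τ hspread (hτ : 0 < τ) (hℓ : 4 ≤ Real.log τ⁻¹) n θ₀ r hr
  refine (EN_postProb_lt_sum_sq_le hP hτ θ₀ hr hspread fun i =>
    (integrable_varianceEnvelope hτ hℓ _).const_mul C).trans ?_
  gcongr
  calc ∑ i, ∫ x, C * varianceEnvelope τ x ∂gaussianReal (θ₀ i) 1
      ≤ ∑ i, C * (129 * Real.sqrt (Real.log τ⁻¹) * (τ + if θ₀ i ≠ 0 then 1 else 0)) := by
        simp only [integral_const_mul]
        gcongr
        exact integral_varianceEnvelope_gaussianReal_le_ite hτ hℓ _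
    _ = C * 129 * Real.sqrt (Real.log τ⁻¹) *
          (n * τ + (Finset.univ.filter fun i => θ₀ i ≠ 0).card) := by
        rw [← Finset.mul_sum, ← Finset.mul_sum, Finset.sum_add_distrib, Finset.sum_boole]
        simp only [Finset.sum_const, Finset.card_univ, Fintype.card_fin, nsmul_eq_mul]
        ring

/-- Without `P.Proper` the posterior normalizations diverge, so `postProb` is `0` by the
convention for division by zero. -/
theorem exists_EN_postProb_lt_sum_sq_le (ha : P.a = 1 / 2) :
    ∃ C > 0, ∀ᶠ τ in nhdsWithin 0 (Ioi 0), ∀ n > 0, ∀ (θ₀ : Fin n → ℝ), ∀ r > 0,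
      EN n θ₀ (fun x => postProb P τ x {θ | r < ∑ i, (θ i - T P τ (x i)) ^ 2}) ≤
        C * Real.sqrt (Real.log τ⁻¹) *
          (n * τ + (Finset.univ.filter fun i => θ₀ i ≠ 0).card) / r := by
  by_cases hP : P.Proper
  · obtain ⟨C, hC, h⟩ := exists_EN_postProb_lt_sum_sq_le_of_proper ha hP
    exact ⟨C, hC, h.mono fun τ hτ n _ => hτ n⟩
  · refine ⟨1, one_pos, ?_⟩
    filter_upwards [self_mem_nhdsWithin] with τ (hτ : 0 < τ) n hn θ₀ r hr
    simp only [EN, postProb_of_not_proper hP hτ hn, zero_mul, integral_zero]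
    positivity

end Risk

theorem tendsto_div_nhdsGT_zero {p : ℕ → ℕ} (hp : ∀ᶠ n in atTop, 0 < p n)
    (hpo : (fun n => (p n : ℝ)) =o[atTop] (fun n => (n : ℝ))) :
    Tendsto (fun n => (p n : ℝ) / n) atTop (nhdsWithin 0 (Ioi 0)) := by
  refine tendsto_nhdsWithin_iff.2 ⟨hpo.tendsto_div_nhds_zero, ?_⟩
  filter_upwards [hp, eventually_gt_atTop 0] with n hpn hn
  exact mem_Ioi.2 (by positivity)

end OneGroup

theorem posterior_contraction_suboptimal_radius_general (P : Prior) (ha : P.a = 1 / 2)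
    (p : ℕ → ℕ)
    (hp : ∀ᶠ n in atTop, 0 < p n)
    (hpo : (fun n => (p n : ℝ)) =o[atTop] (fun n => (n : ℝ)))
    (Mseq : ℕ → ℝ) (hM : Tendsto Mseq atTop atTop) :
    ∀ ε > (0:ℝ), ∃ N : ℕ, ∀ n ≥ N, ∀ θ₀ ∈ nearlyBlack n (p n),
      EN n θ₀ (fun x => postProb P ((p n : ℝ) / (n : ℝ)) x
        {θ : Fin n → ℝ |
          Mseq n * (p n : ℝ) * Real.sqrt (Real.log ((n : ℝ) / (p n : ℝ))) <
            ∑ i, (θ i - T P ((p n : ℝ) / (n : ℝ)) (x i)) ^ 2}) < ε := by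
  intro ε hε
  obtain ⟨C, hC, hrisk⟩ := exists_EN_postProb_lt_sum_sq_le ha
  have hτ := tendsto_div_nhdsGT_zero hp hpo
  have hlog : ∀ᶠ n in atTop, 0 < Real.log ((p n : ℝ) / n)⁻¹ :=
    (Real.tendsto_log_atTop.comp (tendsto_inv_nhdsGT_zero.comp hτ)).eventually_gt_atTop 0
  refine eventually_atTop.1 ?_
  filter_upwards [hτ.eventually hrisk, hlog, hp, eventually_gt_atTop 0,
    hM.eventually_gt_atTop (2 * C / ε)] with n hrisk hlog hpn hn hMn θ₀ hθ₀
  rw [← inv_div (p n : ℝ) n]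
  have : (0:ℝ) < p n := Nat.cast_pos.2 hpn
  have hM0 : 0 < Mseq n := lt_trans (by positivity) hMn
  have hcard : ((Finset.univ.filter fun i => θ₀ i ≠ 0).card : ℝ) ≤ p n := Nat.cast_le.2 hθ₀
  set s := Real.sqrt (Real.log ((p n : ℝ) / n)⁻¹)
  have hs : 0 < s := Real.sqrt_pos.2 hlog
  refine (hrisk n hn θ₀ _ (by positivity)).trans_lt ?_
  calc _ ≤ C * s * (n * ((p n : ℝ) / n) + p n) / (Mseq n * p n * s) := by gcongr
    _ = 2 * C / Mseq n := by field_simp; ring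
    _ < ε := (div_lt_comm₀ hε hM0).1 hMn

/-- equation (3.8): for `a = 1/2` and `τ_n = p_n/n`, the posterior
contracts around the Bayes estimate at the (suboptimally fast) rate
`p_n √(log(n/p_n))`. -/
theorem posterior_contraction_suboptimal_radius (P : Prior) (ha : P.a = 1/2)
    (p : ℕ → ℕ)
    (hp : Tendsto p atTop atTop)
    (hpo : (fun n => (p n : ℝ)) =o[atTop] (fun n => (n : ℝ)))
    (Mseq : ℕ → ℝ) (hM : Tendsto Mseq atTop atTop) :
    ∀ ε > (0:ℝ), ∃ N : ℕ, ∀ n ≥ N, ∀ θ₀ ∈ nearlyBlack n (p n),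
      EN n θ₀ (fun x => postProb P ((p n : ℝ) / (n : ℝ)) x
        {θ : Fin n → ℝ |
          Mseq n * (p n : ℝ) * Real.sqrt (Real.log ((n : ℝ) / (p n : ℝ))) <
            ∑ i, (θ i - T P ((p n : ℝ) / (n : ℝ)) (x i)) ^ 2}) < ε :=
  posterior_contraction_suboptimal_radius_general P ha p (hp.eventually_gt_atTop 0) hpo Mseq hM
end
end
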